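/- Let κ > 0 and let n be a positive integer such that P(R ≥ κ/n) > 0 and P(R ≥ κ/(n−ζ)) = 0 for some ζ ∈ (0,1); assume moreover that P(R₁ + ⋯ + Rₙ = κ) = 0, where R₁,…,Rₙ are independent copies of R. Then P(Y_t ≥ κt) = Qⁿ·D_I^{(n)}(κ)·t^{−(γ−1)n}·(1+o(1)) as t → ∞, where D_I^{(n)}(κ) := (1/n!) ∫_{[0,1]ⁿ} P(s₁R₁ + ⋯ + sₙRₙ ≥ κ) ν(ds₁)⋯ν(dsₙ) is a finite positive constant. -/

import Mathlib

open MeasureTheory Filter Set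
open scoped ENNReal NNReal Topology

noncomputable section

/-- `ℓ_t(s,u)`: the length of the interval `[s,s+u] ∩ [0,t]`. -/
def ellK (t s u : ℝ) : ℝ := max 0 (min (s + u) t - max s 0)

/-- The intensity measure `u^{-γ-1} du` on `(0,∞)`. -/
def muU (γ : ℝ) : Measure ℝ :=
  (volume.restrict (Set.Ioi 0)).withDensity fun u => ENNReal.ofReal (u ^ (-γ - 1))

/-- The measure `μ^ℓ_t` on `(0,∞)`:
`μ^ℓ_t(A) = ∫_ℝ ∫_0^∞ 1{ℓ_t(s,u) ∈ A} u^{-γ-1} du ds`. -/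
def muEll (γ t : ℝ) : Measure ℝ :=
  (Measure.map (fun p : ℝ × ℝ => ellK t p.1 p.2)
    ((volume : Measure ℝ).prod (muU γ))).restrict (Set.Ioi 0)

/-- The measure `μ^{ℓ,r}_t` on `(0,∞)`:
`μ^{ℓ,r}_t(A) = ∫_{(0,∞)} ∫_{(0,∞)} 1{rℓ ∈ A} μ^ℓ_t(dℓ) F_R(dr)`. -/
def muEllR (γ t : ℝ) (FR : Measure ℝ) : Measure ℝ :=
  (Measure.map (fun p : ℝ × ℝ => p.1 * p.2) (FR.prod (muEll γ t))).restrict (Set.Ioi 0)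

/-- The measure `ν` on `[0,1]`: density `s^{-(γ+1)} + ((2-γ)/γ)·s^{-γ}` on `(0,1)` with
respect to Lebesgue measure, together with an atom of mass `1/(γ(γ-1))` at the point `1`. -/
def nuM (γ : ℝ) : Measure ℝ :=
  (volume.restrict (Set.Ioo 0 1)).withDensity
      (fun s => ENNReal.ofReal (s ^ (-(γ + 1)) + (2 - γ) / γ * s ^ (-γ)))
    + (Real.toNNReal (1 / (γ * (γ - 1)))) • Measure.dirac 1

instance nuM.sigmaFinite (γ : ℝ) : SigmaFinite (nuM γ) := by
  unfold nuM; infer_instance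

end

/-!
By scaling, `Y_t / t` has a centred infinitely divisible law with Lévy measure `ε_t • Λ`, where
`Λ` is the law of `R * s` under `F_R ⊗ ν` and `ε_t = Q t^{1-γ} → 0`. The jumps of `Λ` lie in
`(0, M]` with `(n - 1) M < κ`, so exceeding `κ` requires at least `n` jumps that are not small.
The number of such jumps is Poisson with mean of order `ε_t`, hence `n` of them occur with
probability of order `ε_t ^ n`, and the constant is `Λ^{*n}[κ, ∞) / n!`. The compensated small
jumps do not matter: if they are smaller than `δ`, the Chernoff bound with an exponent of order
`log (1 / ε_t)` makes the probability that their sum exceeds a multiple of `n δ` negligible with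
respect to `ε_t ^ n`. The resulting bounds meet as `δ → 0` because `κ` is not an atom of `Λ^{*n}`.
-/

/-! ### Convolution powers -/

lemma addChar_map_sum {A M ι : Type*} [AddCommMonoid A] [CommMonoid M] (ψ : AddChar A M)
    (x : ι → A) (s : Finset ι) : ψ (∑ i ∈ s, x i) = ∏ i ∈ s, ψ (x i) :=
  map_prod ψ.toMonoidHom (fun i => Multiplicative.ofAdd (x i)) s

lemma ae_pi_forall {ι α : Type*} [Fintype ι] [MeasurableSpace α] {m : Measure α} [SigmaFinite m]
    {p : α → Prop} (h : ∀ᵐ a ∂m, p a) : ∀ᵐ y ∂Measure.pi fun _ : ι => m, ∀ i, p (y i) :=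
  ae_all_iff.2 fun _ => Measure.tendsto_eval_ae_ae h

/-- The `n`-fold convolution power of a measure `m`, i.e. the image of the product measure `m ^ n`
under summation of the coordinates. The measure `m` is allowed to be infinite. -/
noncomputable def convPow (m : Measure ℝ) (n : ℕ) : Measure ℝ :=
  (Measure.pi fun _ : Fin n => m).map fun x => ∑ i, x i

section convPow

variable {m : Measure ℝ} {n : ℕ}

lemma convPow_apply {s : Set ℝ} (hs : MeasurableSet s) :
    convPow m n s = Measure.pi (fun _ : Fin n => m) {x | ∑ i, x i ∈ s} :=
  Measure.map_apply (by fun_prop) hs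

lemma convPow_univ [SigmaFinite m] : convPow m n univ = m univ ^ n := by
  simp [convPow_apply, Measure.pi_univ]

instance [IsFiniteMeasure m] : IsFiniteMeasure (convPow m n) :=
  Measure.isFiniteMeasure_map _ _

lemma measureReal_convPow_univ [SigmaFinite m] : (convPow m n).real univ = m.real univ ^ n := by
  simp [measureReal_def, convPow_univ]

lemma convPow_smul [SigmaFinite m] (c : ℝ≥0) : convPow (c • m) n = c ^ n • convPow m n := by
  have pi_smul : Measure.pi (fun _ : Fin n => c • m) = c ^ n • Measure.pi (fun _ => m) := by
    refine Measure.pi_eq fun s _ => ?_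
    simp only [Measure.smul_apply, ENNReal.smul_def, smul_eq_mul, Measure.pi_pi,
      Finset.prod_mul_distrib, Finset.prod_const, Finset.card_univ, Fintype.card_fin,
      ENNReal.coe_pow]
  rw [convPow, pi_smul, Measure.map_smul, convPow]

lemma integral_convPow {𝕜 : Type*} [RCLike 𝕜] [SigmaFinite m] {ψ : AddChar ℝ 𝕜}
    (hψ : Measurable ψ) : ∫ x, ψ x ∂convPow m n = (∫ v, ψ v ∂m) ^ n := by
  rw [convPow, integral_map (by fun_prop) hψ.aestronglyMeasurable]
  simp_rw [addChar_map_sum]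
  simpa using integral_fintype_prod_eq_pow (ι := Fin n) (μ := m) ψ

lemma integrable_convPow {𝕜 : Type*} [RCLike 𝕜] [SigmaFinite m] {ψ : AddChar ℝ 𝕜}
    (hψ : Measurable ψ) (hm : Integrable ψ m) : Integrable ψ (convPow m n) := by
  rw [convPow, integrable_map_measure hψ.aestronglyMeasurable (by fun_prop)]
  simpa only [Function.comp_def, addChar_map_sum] using
    Integrable.fintype_prod (f := fun _ : Fin n => ψ) fun _ => hm

lemma convPow_Ici_eq_zero {M x : ℝ} {j : ℕ} [SigmaFinite m] (hM : 0 ≤ M) (hm : ∀ᵐ v ∂m, v ≤ M)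
    (hj : j < n) (hx : (n - 1) * M < x) : convPow m j (Ici x) = 0 := by
  rw [convPow_apply measurableSet_Ici, measure_eq_zero_iff_ae_notMem]
  filter_upwards [ae_pi_forall hm] with y hy
  have hj' : (j : ℝ) ≤ n - 1 := by
    have : (j : ℝ) + 1 ≤ n := mod_cast hj
    linarith
  have : ∑ i, y i < x := calc
    ∑ i, y i ≤ ∑ _i : Fin j, M := Finset.sum_le_sum fun i _ => hy i
    _ = j * M := by simp
    _ ≤ (n - 1) * M := by gcongr
    _ < x := hx
  simpa using this

lemma convPow_restrict_Ici_apply_Ici {M δ x : ℝ} [SigmaFinite m] (hm : ∀ᵐ v ∂m, v ≤ M)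
    (hx : (n - 1) * M + δ ≤ x) :
    convPow (m.restrict (Ici δ)) n (Ici x) = convPow m n (Ici x) := by
  have hmeas : MeasurableSet {y : Fin n → ℝ | ∑ i, y i ∈ Ici x} :=
    measurableSet_preimage (by fun_prop) measurableSet_Ici
  rw [convPow_apply measurableSet_Ici, convPow_apply measurableSet_Ici, ← Measure.restrict_pi_pi,
    Measure.restrict_apply hmeas]
  refine measure_congr ?_
  filter_upwards [ae_pi_forall hm] with y hy
  refine propext ⟨fun h => h.1, fun h => ⟨h, fun i _ => ?_⟩⟩
  have hsum : x ≤ ∑ j, y j := h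
  rw [← Finset.add_sum_erase _ _ (Finset.mem_univ i)] at hsum
  have others_le : ∑ j ∈ Finset.univ.erase i, y j ≤ (n - 1) * M := by
    refine (Finset.sum_le_card_nsmul _ _ M fun j _ => hy j).trans_eq ?_
    have := i.pos
    rw [Finset.card_erase_of_mem (Finset.mem_univ i), Finset.card_univ, Fintype.card_fin,
      nsmul_eq_mul, Nat.cast_pred this]
  exact show δ ≤ y i by linarith

lemma convPow_Ici_ne_zero [SigmaFinite m] {x : ℝ} (hn : n ≠ 0) (h : m (Ici (x / n)) ≠ 0) :
    convPow m n (Ici x) ≠ 0 := by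
  have hbox : (univ.pi fun _ => Ici (x / n)) ⊆ {y : Fin n → ℝ | ∑ i, y i ∈ Ici x} := by
    intro y hy
    have hy' : ∑ _i : Fin n, x / n ≤ ∑ i, y i := Finset.sum_le_sum fun i _ => hy i (mem_univ i)
    rwa [Finset.sum_const, Finset.card_univ, Fintype.card_fin, nsmul_eq_mul,
      mul_div_cancel₀ _ (Nat.cast_ne_zero.2 hn)] at hy'
  have hpos : Measure.pi (fun _ : Fin n => m) (univ.pi fun _ => Ici (x / n)) ≠ 0 := by
    rw [Measure.pi_pi]
    simpa using fun h0 => absurd h0 h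
  rw [convPow_apply measurableSet_Ici]
  exact fun h0 => hpos (measure_mono_null hbox h0)

end convPow

/-! ### Compound Poisson laws -/

/-- The compound Poisson law with finite Lévy measure `m`: the law of a sum of `N` independent jumps
with law `m / m(ℝ)`, where `N` is Poisson with parameter `m(ℝ)`. -/
noncomputable def compoundPoisson (m : Measure ℝ) : Measure ℝ :=
  Measure.sum fun j : ℕ => ENNReal.ofReal (Real.exp (-m.real univ) / j.factorial) • convPow m j

section compoundPoisson

variable {m : Measure ℝ} [IsFiniteMeasure m]

lemma integrable_compoundPoisson {ψ : AddChar ℝ ℂ} (hψ : Measurable ψ) (hm : Integrable ψ m) :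
    Integrable ψ (compoundPoisson m) := by
  refine integrable_sum_measure
    (fun j => (integrable_convPow hψ hm).smul_measure ENNReal.ofReal_ne_top) ?_
  have norm_integral (j : ℕ) : ∫ x, ‖ψ x‖ ∂convPow m j = (∫ v, ‖ψ v‖ ∂m) ^ j :=
    integral_convPow (ψ := ((normHom : ℂ →*₀ ℝ) : ℂ →* ℝ).compAddChar ψ) hψ.norm
  refine ((Real.summable_pow_div_factorial (∫ v, ‖ψ v‖ ∂m)).mul_left
    (Real.exp (-m.real univ))).congr fun j => ?_
  rw [integral_smul_measure, norm_integral, ENNReal.toReal_ofReal (by positivity), smul_eq_mul]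
  ring

lemma integral_compoundPoisson {ψ : AddChar ℝ ℂ} (hψ : Measurable ψ) (hm : Integrable ψ m) :
    ∫ x, ψ x ∂compoundPoisson m = Complex.exp (∫ v, (ψ v - 1) ∂m) := by
  have hsum := (NormedSpace.expSeries_div_hasSum_exp (∫ v, ψ v ∂m)).mul_left
    (Complex.exp (-m.real univ))
  rw [← Complex.exp_eq_exp_ℂ, ← Complex.exp_add] at hsum
  rw [integral_sub hm (integrable_const _), integral_const, Complex.real_smul, mul_one,
    sub_eq_neg_add]
  refine (hasSum_integral_measure (integrable_compoundPoisson hψ hm)).unique ?_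
  convert! hsum using 2 with j
  rw [integral_smul_measure, integral_convPow hψ, ENNReal.toReal_ofReal (by positivity),
    Complex.real_smul]
  push_cast
  ring

instance : IsProbabilityMeasure (compoundPoisson m) where
  measure_univ := by
    have hint : Integrable (1 : AddChar ℝ ℂ) (compoundPoisson m) :=
      integrable_compoundPoisson measurable_const (integrable_const _)
    have hone := integral_compoundPoisson (m := m) (ψ := 1) measurable_const (integrable_const _)
    have : IsFiniteMeasure (compoundPoisson m) :=
      (integrable_const_iff_isFiniteMeasure one_ne_zero).1 hint
    simpa [measureReal_def, ENNReal.toReal_eq_one_iff] using hone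

lemma hasSum_measureReal_compoundPoisson {s : Set ℝ} (hs : MeasurableSet s) :
    HasSum (fun j : ℕ => Real.exp (-m.real univ) / j.factorial * (convPow m j).real s)
      ((compoundPoisson m).real s) := by
  have hint : Integrable (s.indicator (1 : ℝ → ℝ)) (compoundPoisson m) :=
    (integrable_const 1).indicator hs
  rw [← integral_indicator_one hs]
  convert! hasSum_integral_measure hint using 2 with j
  rw [integral_smul_measure, integral_indicator_one hs, ENNReal.toReal_ofReal (by positivity),
    smul_eq_mul]

lemma le_measureReal_compoundPoisson {s : Set ℝ} (hs : MeasurableSet s) (n : ℕ) :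
    Real.exp (-m.real univ) / n.factorial * (convPow m n).real s ≤ (compoundPoisson m).real s :=
  le_hasSum (hasSum_measureReal_compoundPoisson hs) n fun _ _ => by positivity

lemma measureReal_compoundPoisson_le {s : Set ℝ} (hs : MeasurableSet s) {n : ℕ}
    (hn : ∀ j < n, convPow m j s = 0) :
    (compoundPoisson m).real s
      ≤ (convPow m n).real s / n.factorial + m.real univ ^ (n + 1) := by
  set a := m.real univ
  have ha : 0 ≤ a := measureReal_nonneg
  have hsplit := (hasSum_nat_add_iff' (n + 1)).2 (hasSum_measureReal_compoundPoisson (m := m) hs)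
  have hhead : ∑ j ∈ Finset.range (n + 1), Real.exp (-a) / j.factorial * (convPow m j).real s
      = Real.exp (-a) / n.factorial * (convPow m n).real s := by
    rw [Finset.sum_range_succ, Finset.sum_eq_zero, zero_add]
    intro j hj
    rw [measureReal_def, hn j (Finset.mem_range.1 hj), ENNReal.toReal_zero, mul_zero]
  have htail : (compoundPoisson m).real s - Real.exp (-a) / n.factorial * (convPow m n).real s
      ≤ a ^ (n + 1) * (Real.exp (-a) * Real.exp a) := by
    have hexp := ((NormedSpace.expSeries_div_hasSum_exp a).mul_left (Real.exp (-a))).mul_left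
      (a ^ (n + 1))
    rw [← Real.exp_eq_exp_ℝ] at hexp
    rw [← hhead]
    refine hasSum_le (fun j => ?_) hsplit hexp
    calc Real.exp (-a) / (j + (n + 1)).factorial * (convPow m (j + (n + 1))).real s
        ≤ Real.exp (-a) / j.factorial * a ^ (j + (n + 1)) := by
          gcongr
          · exact Nat.le_add_right j (n + 1)
          · exact (measureReal_mono (subset_univ s)).trans_eq measureReal_convPow_univ
      _ = a ^ (n + 1) * (Real.exp (-a) * (a ^ j / j.factorial)) := by ring
  have hle : Real.exp (-a) / n.factorial * (convPow m n).real s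
      ≤ (convPow m n).real s / n.factorial := by
    rw [div_mul_eq_mul_div]
    gcongr
    exact mul_le_of_le_one_left measureReal_nonneg (Real.exp_le_one_iff.2 (neg_nonpos.2 ha))
  rw [← Real.exp_add, neg_add_cancel, Real.exp_zero, mul_one] at htail
  linarith

end compoundPoisson

/-! ### Compensated Poisson laws -/

/-- The additive character `x ↦ exp (z * x)` of the real line. -/
noncomputable def expChar (z : ℂ) : AddChar ℝ ℂ where
  toFun x := Complex.exp (z * x)
  map_zero_eq_one' := by simp
  map_add_eq_mul' x y := by rw [← Complex.exp_add, Complex.ofReal_add, mul_add]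

/-- The compensated compound Poisson law with finite Lévy measure `m`: the compound Poisson law,
centred at its mean. -/
noncomputable def compensatedPoisson (m : Measure ℝ) : Measure ℝ :=
  (compoundPoisson m).map fun x => x - ∫ v, v ∂m

/-- The exponent `∫ (exp (z * v) - 1 - z * v) Λ(dv)` of a centred infinitely divisible law without
Gaussian part, with Lévy measure `Λ`. It is evaluated at imaginary `z` for characteristic functions
and at real `z` for exponential moments. -/
noncomputable def levyExponent (Λ : Measure ℝ) (z : ℂ) : ℂ :=
  ∫ v, (Complex.exp (z * v) - 1 - z * v) ∂Λ

lemma levyExponent_smul (c : ℝ≥0) (Λ : Measure ℝ) (z : ℂ) :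
    levyExponent (c • Λ) z = c * levyExponent Λ z := by
  rw [levyExponent, integral_smul_nnreal_measure, NNReal.smul_def, Complex.real_smul, levyExponent]

lemma norm_exp_sub_one_sub_le (w : ℂ) : ‖Complex.exp w - 1 - w‖ ≤ ‖w‖ ^ 2 * Real.exp ‖w‖ := by
  have h := Complex.norm_exp_sub_sum_le_norm_mul_exp w 2
  simpa [Finset.sum_range_succ, sub_sub] using h

section jumps

variable {m : Measure ℝ} {δ : ℝ}

lemma norm_exp_sub_one_sub_le_mul_sq (hm : ∀ᵐ v ∂m, |v| ≤ δ) (z : ℂ) :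
    ∀ᵐ v : ℝ ∂m, ‖Complex.exp (z * v) - 1 - z * v‖ ≤ ‖z‖ ^ 2 * Real.exp (‖z‖ * δ) * v ^ 2 := by
  filter_upwards [hm] with v hv
  calc ‖Complex.exp (z * v) - 1 - z * v‖
      ≤ ‖z * v‖ ^ 2 * Real.exp ‖z * v‖ := norm_exp_sub_one_sub_le _
    _ = ‖z‖ ^ 2 * Real.exp (‖z‖ * |v|) * v ^ 2 := by
      rw [norm_mul, Complex.norm_real, Real.norm_eq_abs, mul_pow, sq_abs]
      ring
    _ ≤ ‖z‖ ^ 2 * Real.exp (‖z‖ * δ) * v ^ 2 := by gcongr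

lemma integrable_exp_sub_one_sub (hm : ∀ᵐ v ∂m, |v| ≤ δ) (hsq : Integrable (fun v => v ^ 2) m)
    (z : ℂ) : Integrable (fun v : ℝ => Complex.exp (z * v) - 1 - z * v) m :=
  (hsq.const_mul _).mono' (by fun_prop) (norm_exp_sub_one_sub_le_mul_sq hm z)

lemma norm_levyExponent_le (hm : ∀ᵐ v ∂m, |v| ≤ δ) (hsq : Integrable (fun v => v ^ 2) m) (z : ℂ) :
    ‖levyExponent m z‖ ≤ ‖z‖ ^ 2 * Real.exp (‖z‖ * δ) * ∫ v, v ^ 2 ∂m :=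
  (norm_integral_le_of_norm_le (hsq.const_mul _) (norm_exp_sub_one_sub_le_mul_sq hm z)).trans_eq
    (integral_const_mul _ _)

variable [IsFiniteMeasure m]

instance : IsProbabilityMeasure (compensatedPoisson m) :=
  Measure.isProbabilityMeasure_map (by fun_prop)

lemma integrable_id_of_ae_abs_le (hm : ∀ᵐ v ∂m, |v| ≤ δ) : Integrable (fun v => v) m :=
  .of_bound (by fun_prop) δ hm

lemma integrable_sq_of_ae_abs_le (hm : ∀ᵐ v ∂m, |v| ≤ δ) : Integrable (fun v => v ^ 2) m := by
  refine .of_bound (by fun_prop) (δ ^ 2) ?_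
  filter_upwards [hm] with v hv
  rw [norm_pow]
  exact pow_le_pow_left₀ (norm_nonneg v) hv 2

lemma integrable_expChar_of_ae_abs_le (hm : ∀ᵐ v ∂m, |v| ≤ δ) (z : ℂ) :
    Integrable (expChar z) m := by
  have hsum := ((integrable_exp_sub_one_sub hm (integrable_sq_of_ae_abs_le hm) z).add
    ((integrable_id_of_ae_abs_le hm).ofReal.const_mul z)).add (integrable_const 1)
  refine hsum.congr (.of_forall fun v => ?_)
  simp [expChar]

lemma measurable_expChar (z : ℂ) : Measurable (expChar z) := by
  change Measurable fun x : ℝ => Complex.exp (z * x)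
  fun_prop

lemma integrable_cexp_compensatedPoisson (hm : ∀ᵐ v ∂m, |v| ≤ δ) (z : ℂ) :
    Integrable (fun x : ℝ => Complex.exp (z * x)) (compensatedPoisson m) := by
  rw [compensatedPoisson, integrable_map_measure (by fun_prop) (by fun_prop)]
  refine ((integrable_compoundPoisson (measurable_expChar z)
    (integrable_expChar_of_ae_abs_le hm z)).const_mul
      (Complex.exp (-(z * (∫ v, v ∂m : ℝ))))).congr (.of_forall fun x => ?_)
  simp only [expChar, AddChar.coe_mk, Function.comp_apply, ← Complex.exp_add]
  push_cast
  ring_nf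

lemma complexMGF_compensatedPoisson (hm : ∀ᵐ v ∂m, |v| ≤ δ) (z : ℂ) :
    ProbabilityTheory.complexMGF id (compensatedPoisson m) z
      = Complex.exp (levyExponent m z) := by
  have hchar := integrable_expChar_of_ae_abs_le hm z
  have hlin : Integrable (fun v : ℝ => z * v) m :=
    (integrable_id_of_ae_abs_le hm).ofReal.const_mul z
  calc ProbabilityTheory.complexMGF id (compensatedPoisson m) z
      = ∫ x, expChar z x * Complex.exp (-(z * (∫ v, v ∂m : ℝ))) ∂compoundPoisson m := by
        rw [compensatedPoisson, ProbabilityTheory.complexMGF_id_map (by fun_prop),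
          ProbabilityTheory.complexMGF]
        refine integral_congr_ae (.of_forall fun x => ?_)
        simp only [expChar, AddChar.coe_mk, ← Complex.exp_add, Complex.ofReal_sub]
        ring_nf
    _ = Complex.exp (∫ v, (expChar z v - 1) ∂m) * Complex.exp (-∫ v : ℝ, z * v ∂m) := by
        rw [integral_mul_const, integral_compoundPoisson (measurable_expChar z) hchar,
          integral_const_mul, integral_complex_ofReal]
    _ = Complex.exp (levyExponent m z) := by
        rw [← Complex.exp_add, ← sub_eq_add_neg, levyExponent]
        exact congrArg _ (integral_sub (hchar.sub (integrable_const 1)) hlin).symm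

lemma charFun_compensatedPoisson (hm : ∀ᵐ v ∂m, |v| ≤ δ) (θ : ℝ) :
    charFun (compensatedPoisson m) θ = Complex.exp (levyExponent m (θ * Complex.I)) := by
  rw [← ProbabilityTheory.complexMGF_id_mul_I, complexMGF_compensatedPoisson hm]

lemma compensatedPoisson_add {m' : Measure ℝ} [IsFiniteMeasure m'] {δ' : ℝ}
    (hm : ∀ᵐ v ∂m, |v| ≤ δ) (hm' : ∀ᵐ v ∂m', |v| ≤ δ') :
    compensatedPoisson (m + m') = compensatedPoisson m ∗ compensatedPoisson m' := by
  have hadd : ∀ᵐ v ∂(m + m'), |v| ≤ max δ δ' :=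
    ae_add_measure_iff.2 ⟨hm.mono fun _ => le_max_of_le_left, hm'.mono fun _ => le_max_of_le_right⟩
  refine Measure.ext_of_charFun (funext fun θ => ?_)
  rw [charFun_conv, charFun_compensatedPoisson hadd, charFun_compensatedPoisson hm,
    charFun_compensatedPoisson hm', ← Complex.exp_add, levyExponent,
    integral_add_measure (integrable_exp_sub_one_sub hm (integrable_sq_of_ae_abs_le hm) _)
      (integrable_exp_sub_one_sub hm' (integrable_sq_of_ae_abs_le hm') _)]
  rfl

lemma mgf_compensatedPoisson_le (hm : ∀ᵐ v ∂m, |v| ≤ δ) (l : ℝ) :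
    ProbabilityTheory.mgf id (compensatedPoisson m) l
      ≤ Real.exp (l ^ 2 * Real.exp (|l| * δ) * ∫ v, v ^ 2 ∂m) := by
  have hmgf := ProbabilityTheory.complexMGF_ofReal (X := id) (μ := compensatedPoisson m) l
  rw [complexMGF_compensatedPoisson hm] at hmgf
  calc ProbabilityTheory.mgf id (compensatedPoisson m) l
      ≤ ‖Complex.exp (levyExponent m l)‖ := by
        rw [hmgf, Complex.norm_real]
        exact le_abs_self _
    _ ≤ Real.exp ‖levyExponent m l‖ := Complex.norm_exp_le_exp_norm _
    _ ≤ Real.exp (l ^ 2 * Real.exp (|l| * δ) * ∫ v, v ^ 2 ∂m) := by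
        have h := norm_levyExponent_le hm (integrable_sq_of_ae_abs_le hm) l
        rw [Complex.norm_real, Real.norm_eq_abs, sq_abs] at h
        exact Real.exp_le_exp.2 h

lemma compensatedPoisson_abs_ge_le (hm : ∀ᵐ v ∂m, |v| ≤ δ) {l : ℝ} (hl : 0 ≤ l) (a : ℝ) :
    (compensatedPoisson m).real {x | a ≤ |x|}
      ≤ 2 * Real.exp (-l * a + l ^ 2 * Real.exp (l * δ) * ∫ v, v ^ 2 ∂m) := by
  have hint (y : ℝ) : Integrable (fun x => Real.exp (y * id x)) (compensatedPoisson m) := by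
    simpa [Complex.norm_exp] using (integrable_cexp_compensatedPoisson hm y).norm
  have upper : (compensatedPoisson m).real {x | a ≤ x}
      ≤ Real.exp (-l * a) * ProbabilityTheory.mgf id (compensatedPoisson m) l :=
    ProbabilityTheory.measure_ge_le_exp_mul_mgf a hl (hint l)
  have lower : (compensatedPoisson m).real {x | x ≤ -a}
      ≤ Real.exp (-l * a) * ProbabilityTheory.mgf id (compensatedPoisson m) (-l) := by
    simpa using ProbabilityTheory.measure_le_le_exp_mul_mgf (-a) (neg_nonpos.2 hl) (hint (-l))
  have mgf_pos_le := mgf_compensatedPoisson_le hm l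
  have mgf_neg_le := mgf_compensatedPoisson_le hm (-l)
  rw [abs_of_nonneg hl] at mgf_pos_le
  rw [abs_neg, abs_of_nonneg hl, neg_sq] at mgf_neg_le
  have hsub : {x : ℝ | a ≤ |x|} ⊆ {x | a ≤ x} ∪ {x | x ≤ -a} := fun x (hx : a ≤ |x|) =>
    show a ≤ x ∨ x ≤ -a from (le_abs.1 hx).imp_right le_neg_of_le_neg
  calc (compensatedPoisson m).real {x | a ≤ |x|}
      ≤ (compensatedPoisson m).real {x | a ≤ x} + (compensatedPoisson m).real {x | x ≤ -a} :=
        (measureReal_mono hsub).trans (measureReal_union_le _ _)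
    _ ≤ Real.exp (-l * a) * Real.exp (l ^ 2 * Real.exp (l * δ) * ∫ v, v ^ 2 ∂m)
        + Real.exp (-l * a) * Real.exp (l ^ 2 * Real.exp (l * δ) * ∫ v, v ^ 2 ∂m) := by
        gcongr
        · exact upper.trans (by gcongr)
        · exact lower.trans (by gcongr)
    _ = 2 * Real.exp (-l * a + l ^ 2 * Real.exp (l * δ) * ∫ v, v ^ 2 ∂m) := by
        rw [Real.exp_add]
        ring

end jumps

/-- The bound, for Lévy measures of intensity `ε` carried by `[-δ, δ]`, on the probability that the
compensated Poisson law charges `{x | 2 * p * δ ≤ |x|}`; see `compensatedPoisson_abs_ge_le_small`.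
It is Chernoff's bound with exponent `-log ε / (2 * δ)`. -/
noncomputable def smallJumpBound (p : ℕ) (δ C ε : ℝ) : ℝ :=
  2 * ε ^ p * Real.exp (C * (Real.log ε / (2 * δ)) ^ 2 * √ε)

lemma compensatedPoisson_abs_ge_le_small {m : Measure ℝ} [IsFiniteMeasure m] {δ C ε : ℝ}
    (hδ : 0 < δ) (hε : 0 < ε) (hε1 : ε ≤ 1) (hm : ∀ᵐ v ∂m, |v| ≤ δ)
    (hsq : ∫ v, v ^ 2 ∂m ≤ ε * C) (p : ℕ) :
    (compensatedPoisson m).real {x | 2 * p * δ ≤ |x|} ≤ smallJumpBound p δ C ε := by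
  set l := -Real.log ε / (2 * δ) with hl
  have hl0 : 0 ≤ l := div_nonneg (neg_nonneg.2 (Real.log_nonpos hε.le hε1)) (by positivity)
  have hexp : Real.exp (l * δ) * ε = √ε := by
    nth_rewrite 1 [← Real.exp_log hε]
    rw [Real.sqrt_eq_rpow, Real.rpow_def_of_pos hε, hl, ← Real.exp_add]
    congr 1
    field_simp
    ring
  have hpow : -l * (2 * p * δ) = p * Real.log ε := by
    rw [hl]
    field_simp
  calc (compensatedPoisson m).real {x | 2 * p * δ ≤ |x|}
      ≤ 2 * Real.exp (-l * (2 * p * δ) + l ^ 2 * Real.exp (l * δ) * ∫ v, v ^ 2 ∂m) :=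
        compensatedPoisson_abs_ge_le hm hl0 _
    _ ≤ 2 * Real.exp (p * Real.log ε + l ^ 2 * Real.exp (l * δ) * (ε * C)) := by
        rw [hpow]
        gcongr
    _ = smallJumpBound p δ C ε := by
        rw [smallJumpBound, Real.exp_add, ← Real.log_pow, Real.exp_log (by positivity), ← hexp, hl]
        ring_nf

lemma tendsto_smallJumpBound_div_pow (n : ℕ) (δ C : ℝ) :
    Tendsto (fun ε => smallJumpBound (n + 1) δ C ε / ε ^ n) (𝓝[>] 0) (𝓝 0) := by
  have hlog : Tendsto (fun ε : ℝ => Real.log ε * ε ^ (1 / 4 : ℝ)) (𝓝[>] 0) (𝓝 0) :=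
    tendsto_log_mul_rpow_nhdsGT_zero (by norm_num)
  have hexponent : Tendsto (fun ε : ℝ => C / (2 * δ) ^ 2 * (Real.log ε * ε ^ (1 / 4 : ℝ)) ^ 2)
      (𝓝[>] 0) (𝓝 0) := by
    simpa using (hlog.pow 2).const_mul (C / (2 * δ) ^ 2)
  have hid : Tendsto (fun ε : ℝ => ε) (𝓝[>] 0) (𝓝 0) := nhdsWithin_le_nhds
  have hlim := (hid.const_mul 2).mul ((Real.continuous_exp.tendsto 0).comp hexponent)
  simp only [mul_zero, zero_mul] at hlim
  refine hlim.congr' ?_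
  filter_upwards [self_mem_nhdsWithin] with ε (hε : 0 < ε)
  have hroot : (ε ^ (1 / 4 : ℝ)) ^ 2 = √ε := by
    rw [← Real.rpow_natCast, ← Real.rpow_mul hε.le, Real.sqrt_eq_rpow]
    norm_num
  rw [smallJumpBound, Function.comp_apply, mul_pow (Real.log ε), hroot, div_pow]
  field_simp
  ring

/-! ### Tails of convolutions and of weak limits -/

lemma measureReal_conv_Ici_le (μ ν : Measure ℝ) [IsProbabilityMeasure μ] [IsProbabilityMeasure ν]
    (x η : ℝ) :
    (μ ∗ ν).real (Ici x) ≤ μ.real {y | η ≤ |y|} + ν.real (Ici (x - η)) := by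
  have hsub : (fun p : ℝ × ℝ => p.1 + p.2) ⁻¹' Ici x
      ⊆ {y | η ≤ |y|} ×ˢ univ ∪ univ ×ˢ Ici (x - η) := by
    rintro ⟨a, b⟩ (hab : x ≤ a + b)
    by_cases ha : η ≤ |a|
    · exact Or.inl ⟨ha, trivial⟩
    · exact Or.inr ⟨trivial, show x - η ≤ b by linarith [le_abs_self a]⟩
  rw [Measure.conv, map_measureReal_apply (by fun_prop) measurableSet_Ici]
  refine (measureReal_mono hsub).trans ((measureReal_union_le _ _).trans_eq ?_)
  simp [measureReal_prod_prod]

lemma le_measureReal_conv_Ici (μ ν : Measure ℝ) [IsProbabilityMeasure μ] [IsProbabilityMeasure ν]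
    (x η : ℝ) :
    (1 - μ.real {y | η ≤ |y|}) * ν.real (Ici (x + η)) ≤ (μ ∗ ν).real (Ici x) := by
  have hsub : {y | η ≤ |y|}ᶜ ×ˢ Ici (x + η) ⊆ (fun p : ℝ × ℝ => p.1 + p.2) ⁻¹' Ici x := by
    rintro ⟨a, b⟩ ⟨ha, hb⟩
    have ha' : |a| < η := not_le.1 ha
    have hb' : x + η ≤ b := hb
    exact show x ≤ a + b by linarith [neg_abs_le a]
  have hmeas : MeasurableSet {y : ℝ | η ≤ |y|} :=
    measurableSet_le measurable_const measurable_norm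
  rw [← probReal_compl_eq_one_sub hmeas, ← measureReal_prod_prod, Measure.conv,
    map_measureReal_apply (by fun_prop) measurableSet_Ici]
  exact measureReal_mono hsub

section weakLimit

variable {ν : ℕ → Measure ℝ} [∀ k, IsProbabilityMeasure (ν k)] {μ : Measure ℝ}
  [IsProbabilityMeasure μ]

lemma tendsto_probabilityMeasure_of_charFun
    (h : ∀ θ, Tendsto (fun k => charFun (ν k) θ) atTop (𝓝 (charFun μ θ))) :
    Tendsto (β := ProbabilityMeasure ℝ) (fun k => ⟨ν k, inferInstance⟩) atTop
      (𝓝 ⟨μ, inferInstance⟩) :=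
  ProbabilityMeasure.tendsto_of_tendsto_charFun h

lemma measureReal_le_of_isOpen_of_tendsto_charFun
    (h : ∀ θ, Tendsto (fun k => charFun (ν k) θ) atTop (𝓝 (charFun μ θ))) {U : Set ℝ}
    (hU : IsOpen U) {b : ℝ} (hb : ∀ k, (ν k).real U ≤ b) : μ.real U ≤ b := by
  have hb0 : 0 ≤ b := measureReal_nonneg.trans (hb 0)
  have hlim := ProbabilityMeasure.le_liminf_measure_open_of_tendsto
    (tendsto_probabilityMeasure_of_charFun h) hU
  refine ENNReal.toReal_le_of_le_ofReal hb0 (hlim.trans (liminf_le_of_le (by isBoundedDefault) ?_))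
  intro c hc
  obtain ⟨k, hk : c ≤ ν k U⟩ := hc.exists
  exact hk.trans ((ENNReal.le_ofReal_iff_toReal_le (measure_ne_top (ν k) U) hb0).2 (hb k))

lemma le_measureReal_of_isClosed_of_tendsto_charFun
    (h : ∀ θ, Tendsto (fun k => charFun (ν k) θ) atTop (𝓝 (charFun μ θ))) {F : Set ℝ}
    (hF : IsClosed F) {b : ℝ} (hb : ∀ k, b ≤ (ν k).real F) : b ≤ μ.real F := by
  have hopen := measureReal_le_of_isOpen_of_tendsto_charFun h hF.isOpen_compl (b := 1 - b)
    fun k => by linarith [probReal_compl_eq_one_sub (μ := ν k) hF.measurableSet, hb k]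
  linarith [probReal_compl_eq_one_sub (μ := μ) hF.measurableSet]

end weakLimit

lemma continuousAt_measureReal_Ici {μ : Measure ℝ} {x y : ℝ} (hy : μ (Ici y) ≠ ⊤) (hyx : y < x)
    (hx : μ {x} = 0) : ContinuousAt (fun z => μ.real (Ici z)) x := by
  have : IsFiniteMeasure (μ.restrict (Ici y)) := isFiniteMeasure_restrict.2 hy
  have hne : ∀ᵐ v ∂μ.restrict (Ici y), v ≠ x :=
    ae_restrict_of_ae (measure_eq_zero_iff_ae_notMem.1 hx)
  have hcont : ContinuousAt
      (fun z => ∫ v, (Ici z).indicator (1 : ℝ → ℝ) v ∂μ.restrict (Ici y)) x := by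
    refine continuousAt_of_dominated (bound := 1)
      (.of_forall fun z => (measurable_one.indicator measurableSet_Ici).aestronglyMeasurable)
      (.of_forall fun z => .of_forall fun v => ?_) (integrable_const 1) ?_
    · exact (norm_indicator_le_norm_self _ _).trans (by simp)
    · filter_upwards [hne] with v hv
      refine tendsto_nhds_of_eventually_eq ?_
      rcases lt_or_gt_of_ne hv with h | h
      · filter_upwards [eventually_gt_nhds h] with z hz
        simp [hz.not_ge, h.not_ge]
      · filter_upwards [eventually_lt_nhds h] with z hz
        simp [hz.le, h.le]
  refine hcont.congr ?_
  filter_upwards [eventually_gt_nhds hyx] with z hz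
  rw [integral_indicator_one measurableSet_Ici, measureReal_restrict_apply measurableSet_Ici,
    inter_eq_left.2 (Ici_subset_Ici.2 hz.le)]

/-! ### Truncation of small jumps -/

lemma measureReal_compensatedPoisson_Ici (m : Measure ℝ) (x : ℝ) :
    (compensatedPoisson m).real (Ici x) = (compoundPoisson m).real (Ici (x + ∫ v, v ∂m)) := by
  rw [compensatedPoisson, map_measureReal_apply (by fun_prop) measurableSet_Ici]
  congr 1
  ext y
  simp

lemma sigmaFinite_of_integrable_of_ae_ne_zero {α : Type*} [MeasurableSpace α] {μ : Measure α}
    {f : α → ℝ} (hf : Integrable f μ) (hne : ∀ᵐ a ∂μ, f a ≠ 0) : SigmaFinite μ := by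
  have hfin := hf.aefinStronglyMeasurable
  have hmem : ∀ᵐ a ∂μ, a ∈ hfin.sigmaFiniteSet := by
    filter_upwards [hne, (ae_restrict_iff' hfin.measurableSet.compl).1 hfin.ae_eq_zero_compl]
      with a ha hzero
    exact by_contra fun hmem => ha (hzero hmem)
  rw [← Measure.restrict_eq_self_of_ae_mem hmem]
  infer_instance

section truncation

variable {Λ : Measure ℝ} {M δ : ℝ}

lemma isFiniteMeasure_restrict_Ici (hsq : Integrable (fun v => v ^ 2) Λ) (hδ : 0 < δ) :
    IsFiniteMeasure (Λ.restrict (Ici δ)) := by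
  refine isFiniteMeasure_restrict.2 (measure_mono (fun _ (hv : δ ≤ _) => ?_) |>.trans_lt
    (hsq.measure_ge_lt_top (pow_pos hδ 2))).ne
  exact pow_le_pow_left₀ hδ.le hv 2

lemma ae_abs_le_of_ae_mem_Ioc (hΛ : ∀ᵐ v ∂Λ, v ∈ Ioc 0 M) : ∀ᵐ v ∂Λ, |v| ≤ M :=
  hΛ.mono fun _ hv => (abs_of_pos hv.1).trans_le hv.2

lemma tendsto_levyExponent_restrict_Ici (hΛ : ∀ᵐ v ∂Λ, v ∈ Ioc 0 M)
    (hsq : Integrable (fun v => v ^ 2) Λ) (z : ℂ) :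
    Tendsto (fun r => levyExponent (Λ.restrict (Ici r)) z) (𝓝[>] 0) (𝓝 (levyExponent Λ z)) := by
  have hint := integrable_exp_sub_one_sub (ae_abs_le_of_ae_mem_Ioc hΛ) hsq z
  simp only [levyExponent, ← integral_indicator measurableSet_Ici]
  refine tendsto_integral_filter_of_dominated_convergence _
    (.of_forall fun r => (hint.indicator measurableSet_Ici).aestronglyMeasurable)
    (.of_forall fun r => .of_forall fun v => norm_indicator_le_norm_self _ _) hint.norm ?_
  filter_upwards [hΛ] with v hv
  refine tendsto_nhds_of_eventually_eq ?_
  filter_upwards [Ioo_mem_nhdsGT hv.1] with r hr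
  exact indicator_of_mem (show v ∈ Ici r from hr.2.le) _

lemma compensatedPoisson_restrict_Ici (hΛ : ∀ᵐ v ∂Λ, v ∈ Ioc 0 M)
    (hsq : Integrable (fun v => v ^ 2) Λ) {r : ℝ} (hr : 0 < r) (hrδ : r ≤ δ) :
    compensatedPoisson (Λ.restrict (Ici r))
      = compensatedPoisson (Λ.restrict (Ico r δ)) ∗ compensatedPoisson (Λ.restrict (Ici δ)) := by
  have := isFiniteMeasure_restrict_Ici hsq hr
  have := isFiniteMeasure_restrict_Ici hsq (hr.trans_le hrδ)
  have : IsFiniteMeasure (Λ.restrict (Ico r δ)) :=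
    isFiniteMeasure_of_le _ (Measure.restrict_mono Ico_subset_Ici_self le_rfl)
  have habs := ae_abs_le_of_ae_mem_Ioc hΛ
  rw [← compensatedPoisson_add (ae_restrict_of_ae habs) (ae_restrict_of_ae habs),
    ← Measure.restrict_union (disjoint_left.2 fun v hv hv' => hv.2.not_ge hv') measurableSet_Ici,
    Ico_union_Ici_eq_Ici hrδ]

variable {μ : Measure ℝ} {η T : ℝ}

lemma exists_seq_truncation (hΛ : ∀ᵐ v ∂Λ, v ∈ Ioc 0 M) (hsq : Integrable (fun v => v ^ 2) Λ)
    (hμ : ∀ θ : ℝ, charFun μ θ = Complex.exp (levyExponent Λ (θ * Complex.I))) (hδ : 0 < δ) :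
    ∃ r : ℕ → ℝ, (∀ k, r k ∈ Ioo 0 δ) ∧ ∀ θ, Tendsto
      (fun k => charFun (compensatedPoisson (Λ.restrict (Ici (r k)))) θ) atTop
        (𝓝 (charFun μ θ)) := by
  obtain ⟨r, -, hr, hr0⟩ := exists_seq_strictAnti_tendsto' hδ
  refine ⟨r, hr, fun θ => ?_⟩
  have hr0' : Tendsto r atTop (𝓝[>] 0) :=
    tendsto_nhdsWithin_iff.2 ⟨hr0, .of_forall fun k => (hr k).1⟩
  rw [hμ]
  refine ((Complex.continuous_exp.tendsto _).comp
    ((tendsto_levyExponent_restrict_Ici hΛ hsq _).comp hr0')).congr fun k => ?_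
  have := isFiniteMeasure_restrict_Ici hsq (hr k).1
  exact (charFun_compensatedPoisson (ae_restrict_of_ae (ae_abs_le_of_ae_mem_Ioc hΛ)) θ).symm

variable [IsProbabilityMeasure μ]

lemma measureReal_Ici_le_add_compensatedPoisson (hΛ : ∀ᵐ v ∂Λ, v ∈ Ioc 0 M)
    (hsq : Integrable (fun v => v ^ 2) Λ)
    (hμ : ∀ θ : ℝ, charFun μ θ = Complex.exp (levyExponent Λ (θ * Complex.I)))
    (hδ : 0 < δ) (hη : 0 < η)
    (hT : ∀ r ∈ Ioo 0 δ, (compensatedPoisson (Λ.restrict (Ico r δ))).real {y | η ≤ |y|} ≤ T)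
    (x : ℝ) :
    μ.real (Ici x) ≤ T + (compensatedPoisson (Λ.restrict (Ici δ))).real (Ici (x - 2 * η)) := by
  obtain ⟨r, hr, hlim⟩ := exists_seq_truncation hΛ hsq hμ hδ
  have (k : ℕ) := isFiniteMeasure_restrict_Ici hsq (hr k).1
  have := isFiniteMeasure_restrict_Ici hsq hδ
  have hsub : Ici x ⊆ Ioi (x - η) := Ici_subset_Ioi.2 (by linarith)
  refine (measureReal_mono hsub).trans
    (measureReal_le_of_isOpen_of_tendsto_charFun hlim isOpen_Ioi fun k => ?_)
  have : IsFiniteMeasure (Λ.restrict (Ico (r k) δ)) :=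
    isFiniteMeasure_of_le _ (Measure.restrict_mono Ico_subset_Ici_self le_rfl)
  calc (compensatedPoisson (Λ.restrict (Ici (r k)))).real (Ioi (x - η))
      ≤ (compensatedPoisson (Λ.restrict (Ici (r k)))).real (Ici (x - η)) :=
        measureReal_mono Ioi_subset_Ici_self
    _ ≤ T + (compensatedPoisson (Λ.restrict (Ici δ))).real (Ici (x - 2 * η)) := by
        rw [compensatedPoisson_restrict_Ici hΛ hsq (hr k).1 (hr k).2.le,
          show x - 2 * η = x - η - η by ring]
        exact (measureReal_conv_Ici_le _ _ _ η).trans (add_le_add_left (hT _ (hr k)) _)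

lemma mul_compensatedPoisson_le_measureReal_Ici (hΛ : ∀ᵐ v ∂Λ, v ∈ Ioc 0 M)
    (hsq : Integrable (fun v => v ^ 2) Λ)
    (hμ : ∀ θ : ℝ, charFun μ θ = Complex.exp (levyExponent Λ (θ * Complex.I))) (hδ : 0 < δ)
    (hT : ∀ r ∈ Ioo 0 δ, (compensatedPoisson (Λ.restrict (Ico r δ))).real {y | η ≤ |y|} ≤ T)
    (x : ℝ) :
    (1 - T) * (compensatedPoisson (Λ.restrict (Ici δ))).real (Ici (x + η)) ≤ μ.real (Ici x) := by
  obtain ⟨r, hr, hlim⟩ := exists_seq_truncation hΛ hsq hμ hδ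
  have (k : ℕ) := isFiniteMeasure_restrict_Ici hsq (hr k).1
  have := isFiniteMeasure_restrict_Ici hsq hδ
  refine le_measureReal_of_isClosed_of_tendsto_charFun hlim isClosed_Ici fun k => ?_
  have : IsFiniteMeasure (Λ.restrict (Ico (r k) δ)) :=
    isFiniteMeasure_of_le _ (Measure.restrict_mono Ico_subset_Ici_self le_rfl)
  rw [compensatedPoisson_restrict_Ici hΛ hsq (hr k).1 (hr k).2.le]
  refine le_trans ?_ (le_measureReal_conv_Ici _ _ x η)
  gcongr
  exact hT _ (hr k)

end truncation

/-! ### Tails of Lévy laws with small intensity -/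

section smallIntensity

variable {Λ : Measure ℝ} {M δ η x : ℝ} {n : ℕ}

lemma sigmaFinite_of_ae_mem_Ioc (hΛ : ∀ᵐ v ∂Λ, v ∈ Ioc 0 M)
    (hsq : Integrable (fun v => v ^ 2) Λ) : SigmaFinite Λ :=
  sigmaFinite_of_integrable_of_ae_ne_zero hsq (hΛ.mono fun _ hv => (pow_pos hv.1 2).ne')

lemma convPow_Ici_ne_top (hΛ : ∀ᵐ v ∂Λ, v ∈ Ioc 0 M) (hsq : Integrable (fun v => v ^ 2) Λ)
    (hx : (n - 1) * M < x) : convPow Λ n (Ici x) ≠ ⊤ := by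
  have := sigmaFinite_of_ae_mem_Ioc hΛ hsq
  have := isFiniteMeasure_restrict_Ici hsq (sub_pos.2 hx)
  rw [← convPow_restrict_Ici_apply_Ici (hΛ.mono fun _ hv => hv.2) (add_sub_cancel _ x).le]
  exact measure_ne_top _ _

lemma compensatedPoisson_restrict_Ici_le (hM : 0 ≤ M) (hΛ : ∀ᵐ v ∂Λ, v ∈ Ioc 0 M)
    (hsq : Integrable (fun v => v ^ 2) Λ) (hδ : 0 < δ) (hx : (n - 1) * M + δ ≤ x) :
    (compensatedPoisson (Λ.restrict (Ici δ))).real (Ici x)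
      ≤ (convPow Λ n).real (Ici x) / n.factorial + Λ.real (Ici δ) ^ (n + 1) := by
  have := sigmaFinite_of_ae_mem_Ioc hΛ hsq
  have := isFiniteMeasure_restrict_Ici hsq hδ
  have hle : ∀ᵐ v ∂Λ, v ≤ M := hΛ.mono fun _ hv => hv.2
  have hmean : 0 ≤ ∫ v, v ∂Λ.restrict (Ici δ) :=
    integral_nonneg_of_ae (ae_restrict_of_ae (hΛ.mono fun _ hv => hv.1.le))
  have hfew : ∀ j < n, convPow (Λ.restrict (Ici δ)) j (Ici x) = 0 := fun j hj =>
    convPow_Ici_eq_zero hM (ae_restrict_of_ae hle) hj (by linarith)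
  calc (compensatedPoisson (Λ.restrict (Ici δ))).real (Ici x)
      ≤ (compoundPoisson (Λ.restrict (Ici δ))).real (Ici x) := by
        rw [measureReal_compensatedPoisson_Ici]
        exact measureReal_mono (Ici_subset_Ici.2 (by linarith))
    _ ≤ _ := measureReal_compoundPoisson_le measurableSet_Ici hfew
    _ = (convPow Λ n).real (Ici x) / n.factorial + Λ.real (Ici δ) ^ (n + 1) := by
        rw [measureReal_def (convPow _ n), convPow_restrict_Ici_apply_Ici hle hx,
          measureReal_restrict_apply_univ, measureReal_def (convPow Λ n)]

lemma le_compensatedPoisson_restrict_Ici (hΛ : ∀ᵐ v ∂Λ, v ∈ Ioc 0 M)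
    (hsq : Integrable (fun v => v ^ 2) Λ) (hδ : 0 < δ)
    (hmean : ∫ v, v ∂Λ.restrict (Ici δ) ≤ η) (hx : (n - 1) * M + δ ≤ x + η) :
    Real.exp (-Λ.real (Ici δ)) / n.factorial * (convPow Λ n).real (Ici (x + η))
      ≤ (compensatedPoisson (Λ.restrict (Ici δ))).real (Ici x) := by
  have := sigmaFinite_of_ae_mem_Ioc hΛ hsq
  have := isFiniteMeasure_restrict_Ici hsq hδ
  calc Real.exp (-Λ.real (Ici δ)) / n.factorial * (convPow Λ n).real (Ici (x + η))
      = Real.exp (-(Λ.restrict (Ici δ)).real univ) / n.factorial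
          * (convPow (Λ.restrict (Ici δ)) n).real (Ici (x + η)) := by
        rw [measureReal_def (convPow _ n), measureReal_def (convPow (Measure.restrict _ _) n),
          convPow_restrict_Ici_apply_Ici (hΛ.mono fun _ hv => hv.2) hx,
          measureReal_restrict_apply_univ]
    _ ≤ (compoundPoisson (Λ.restrict (Ici δ))).real (Ici (x + η)) :=
        le_measureReal_compoundPoisson measurableSet_Ici n
    _ ≤ (compensatedPoisson (Λ.restrict (Ici δ))).real (Ici x) := by
        rw [measureReal_compensatedPoisson_Ici]
        exact measureReal_mono (Ici_subset_Ici.2 (by linarith))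

lemma compensatedPoisson_smul_restrict_Ico_abs_ge_le
    (hsq : Integrable (fun v => v ^ 2) Λ) (hδ : 0 < δ) {ε : ℝ≥0} (hε : 0 < ε) (hε1 : ε ≤ 1)
    (p : ℕ) {r : ℝ} (hr : r ∈ Ioo 0 δ) :
    (compensatedPoisson ((ε • Λ).restrict (Ico r δ))).real {y | 2 * p * δ ≤ |y|}
      ≤ smallJumpBound p δ (∫ v, v ^ 2 ∂Λ) ε := by
  have := isFiniteMeasure_restrict_Ici hsq hr.1
  have : IsFiniteMeasure (Λ.restrict (Ico r δ)) :=
    isFiniteMeasure_of_le _ (Measure.restrict_mono Ico_subset_Ici_self le_rfl)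
  rw [Measure.restrict_smul]
  refine compensatedPoisson_abs_ge_le_small hδ (mod_cast hε) (mod_cast hε1)
    (Measure.ae_smul_measure ?_ _) ?_ p
  · filter_upwards [ae_restrict_mem measurableSet_Ico] with v hv
    exact (abs_of_pos (hr.1.trans_le hv.1)).trans_le hv.2.le
  · rw [integral_smul_nnreal_measure, NNReal.smul_def, smul_eq_mul]
    exact mul_le_mul_of_nonneg_left
      (setIntegral_le_integral hsq (.of_forall fun v => sq_nonneg v)) ε.coe_nonneg

lemma measureReal_convPow_smul [SigmaFinite Λ] (ε : ℝ≥0) (s : Set ℝ) :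
    (convPow (ε • Λ) n).real s = ε ^ n * (convPow Λ n).real s := by
  rw [convPow_smul, measureReal_nnreal_smul_apply, NNReal.coe_pow]

variable {μ : Measure ℝ} [IsProbabilityMeasure μ] {ε : ℝ≥0}

lemma measureReal_Ici_le_of_smul (hM : 0 ≤ M) (hΛ : ∀ᵐ v ∂Λ, v ∈ Ioc 0 M)
    (hsq : Integrable (fun v => v ^ 2) Λ) (hε : 0 < ε) (hε1 : ε ≤ 1)
    (hμ : ∀ θ : ℝ, charFun μ θ = Complex.exp (levyExponent (ε • Λ) (θ * Complex.I)))
    (hδ : 0 < δ) (hx : (n - 1) * M + δ ≤ x - 4 * (n + 1) * δ) :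
    μ.real (Ici x) ≤ smallJumpBound (n + 1) δ (∫ v, v ^ 2 ∂Λ) ε
      + (ε ^ n * (convPow Λ n).real (Ici (x - 4 * (n + 1) * δ)) / n.factorial
        + (ε * Λ.real (Ici δ)) ^ (n + 1)) := by
  have := sigmaFinite_of_ae_mem_Ioc hΛ hsq
  have hΛε := Measure.ae_smul_measure hΛ ε
  have hsqε := hsq.smul_measure_nnreal (c := ε)
  have hη : 0 < 2 * ((n + 1 : ℕ) : ℝ) * δ := by positivity
  refine (measureReal_Ici_le_add_compensatedPoisson hΛε hsqε hμ hδ hη (fun r hr =>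
    compensatedPoisson_smul_restrict_Ico_abs_ge_le hsq hδ hε hε1 (n + 1) hr) x).trans ?_
  rw [show x - 2 * (2 * ((n + 1 : ℕ) : ℝ) * δ) = x - 4 * (n + 1) * δ by push_cast; ring,
    ← measureReal_convPow_smul, ← measureReal_nnreal_smul_apply]
  gcongr
  exact compensatedPoisson_restrict_Ici_le hM hΛε hsqε hδ hx

lemma le_measureReal_Ici_of_smul (hΛ : ∀ᵐ v ∂Λ, v ∈ Ioc 0 M)
    (hsq : Integrable (fun v => v ^ 2) Λ) (hε : 0 < ε) (hε1 : ε ≤ 1)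
    (hμ : ∀ θ : ℝ, charFun μ θ = Complex.exp (levyExponent (ε • Λ) (θ * Complex.I)))
    (hδ : 0 < δ) (hsmall : smallJumpBound (n + 1) δ (∫ v, v ^ 2 ∂Λ) ε ≤ 1)
    (hmean : ε * ∫ v, v ∂Λ.restrict (Ici δ) ≤ 2 * (n + 1) * δ)
    (hx : (n - 1) * M + δ ≤ x + 4 * (n + 1) * δ) :
    (1 - smallJumpBound (n + 1) δ (∫ v, v ^ 2 ∂Λ) ε)
      * (Real.exp (-(ε * Λ.real (Ici δ))) / n.factorial
        * (ε ^ n * (convPow Λ n).real (Ici (x + 4 * (n + 1) * δ)))) ≤ μ.real (Ici x) := by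
  have := sigmaFinite_of_ae_mem_Ioc hΛ hsq
  have hΛε := Measure.ae_smul_measure hΛ ε
  have hsqε := hsq.smul_measure_nnreal (c := ε)
  have hmean' : ∫ v, v ∂(ε • Λ).restrict (Ici δ) ≤ 2 * ((n + 1 : ℕ) : ℝ) * δ := by
    rwa [Measure.restrict_smul, integral_smul_nnreal_measure, NNReal.smul_def, smul_eq_mul,
      Nat.cast_succ]
  have hx' : x + 4 * (n + 1) * δ
      = x + 2 * ((n + 1 : ℕ) : ℝ) * δ + 2 * ((n + 1 : ℕ) : ℝ) * δ := by push_cast; ring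
  refine le_trans ?_ (mul_compensatedPoisson_le_measureReal_Ici hΛε hsqε hμ hδ (fun r hr =>
    compensatedPoisson_smul_restrict_Ico_abs_ge_le hsq hδ hε hε1 (n + 1) hr) x)
  refine mul_le_mul_of_nonneg_left ?_ (sub_nonneg.2 hsmall)
  rw [← measureReal_convPow_smul, ← measureReal_nnreal_smul_apply, hx']
  exact le_compensatedPoisson_restrict_Ici hΛε hsqε hδ hmean' (hx' ▸ hx)

lemma tendsto_smallJumpBound (n : ℕ) (δ C : ℝ) :
    Tendsto (smallJumpBound (n + 1) δ C) (𝓝[>] 0) (𝓝 0) := by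
  have hpow : Tendsto (fun ε : ℝ => ε ^ n) (𝓝[>] 0) (𝓝 (0 ^ n)) :=
    ((continuous_pow n).tendsto 0).mono_left nhdsWithin_le_nhds
  have hmul := (tendsto_smallJumpBound_div_pow n δ C).mul hpow
  rw [zero_mul] at hmul
  refine hmul.congr' ?_
  filter_upwards [self_mem_nhdsWithin] with ε hε
  exact div_mul_cancel₀ _ (pow_pos hε n).ne'

section limit

variable {ι : Type*} {l : Filter ι} {ε : ι → ℝ≥0} {μ : ι → Measure ℝ}
  [∀ i, IsProbabilityMeasure (μ i)] {u : ℝ}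

lemma eventually_measureReal_Ici_div_pow_lt (hM : 0 ≤ M) (hΛ : ∀ᵐ v ∂Λ, v ∈ Ioc 0 M)
    (hsq : Integrable (fun v => v ^ 2) Λ) (hε : Tendsto (fun i => (ε i : ℝ)) l (𝓝[>] 0))
    (hμ : ∀ᶠ i in l, ∀ θ : ℝ,
      charFun (μ i) θ = Complex.exp (levyExponent (ε i • Λ) (θ * Complex.I)))
    (hδ : 0 < δ) (hx : (n - 1) * M + δ ≤ x - 4 * (n + 1) * δ)
    (hu : (convPow Λ n).real (Ici (x - 4 * (n + 1) * δ)) / n.factorial < u) :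
    ∀ᶠ i in l, (μ i).real (Ici x) / ε i ^ n < u := by
  have hε0 : Tendsto (fun i => (ε i : ℝ)) l (𝓝 0) := hε.mono_right nhdsWithin_le_nhds
  have hsmall := (tendsto_smallJumpBound_div_pow n δ (∫ v, v ^ 2 ∂Λ)).comp hε
  have hlim := hsmall.add ((hε0.mul_const (Λ.real (Ici δ) ^ (n + 1))).const_add
    ((convPow Λ n).real (Ici (x - 4 * (n + 1) * δ)) / n.factorial))
  rw [zero_mul, add_zero, zero_add] at hlim
  filter_upwards [hμ, hε self_mem_nhdsWithin, hε0.eventually_le_const one_pos,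
    hlim.eventually_lt_const hu] with i hμi (hεi : 0 < (ε i : ℝ)) hεi1 hlt
  refine lt_of_le_of_lt ?_ hlt
  have hle := measureReal_Ici_le_of_smul hM hΛ hsq (mod_cast hεi) (mod_cast hεi1) hμi hδ hx
  rw [div_le_iff₀ (pow_pos hεi n)]
  refine hle.trans_eq ?_
  rw [Function.comp_apply]
  field_simp
  ring

lemma eventually_lt_measureReal_Ici_div_pow (hΛ : ∀ᵐ v ∂Λ, v ∈ Ioc 0 M)
    (hsq : Integrable (fun v => v ^ 2) Λ) (hε : Tendsto (fun i => (ε i : ℝ)) l (𝓝[>] 0))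
    (hμ : ∀ᶠ i in l, ∀ θ : ℝ,
      charFun (μ i) θ = Complex.exp (levyExponent (ε i • Λ) (θ * Complex.I)))
    (hδ : 0 < δ) (hx : (n - 1) * M + δ ≤ x + 4 * (n + 1) * δ)
    (hu : u < (convPow Λ n).real (Ici (x + 4 * (n + 1) * δ)) / n.factorial) :
    ∀ᶠ i in l, u < (μ i).real (Ici x) / ε i ^ n := by
  have hε0 : Tendsto (fun i => (ε i : ℝ)) l (𝓝 0) := hε.mono_right nhdsWithin_le_nhds
  have hsmall := (tendsto_smallJumpBound n δ (∫ v, v ^ 2 ∂Λ)).comp hε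
  have hmean := hε0.mul_const (∫ v, v ∂Λ.restrict (Ici δ))
  have hexp := (Real.continuous_exp.tendsto _).comp (hε0.mul_const (Λ.real (Ici δ))).neg
  have hlim := (hsmall.const_sub 1).mul (hexp.mul_const
    ((convPow Λ n).real (Ici (x + 4 * (n + 1) * δ)) / n.factorial))
  rw [zero_mul, neg_zero, Real.exp_zero, sub_zero, one_mul, one_mul] at hlim
  rw [zero_mul] at hmean
  filter_upwards [hμ, hε self_mem_nhdsWithin, hε0.eventually_le_const one_pos,
    hsmall.eventually_le_const one_pos,
    hmean.eventually_le_const (show 0 < 2 * ((n : ℝ) + 1) * δ by positivity),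
    hlim.eventually_const_lt hu] with i hμi (hεi : 0 < (ε i : ℝ)) hεi1 hsmalli hmeani hlt
  refine hlt.trans_le ?_
  have hle := le_measureReal_Ici_of_smul hΛ hsq (mod_cast hεi) (mod_cast hεi1) hμi hδ hsmalli
    hmeani hx
  rw [le_div_iff₀ (pow_pos hεi n)]
  refine Eq.trans_le ?_ hle
  simp only [Function.comp_apply]
  ring

theorem tendsto_measureReal_Ici_div_pow (hM : 0 ≤ M) (hΛ : ∀ᵐ v ∂Λ, v ∈ Ioc 0 M)
    (hsq : Integrable (fun v => v ^ 2) Λ) (hε : Tendsto (fun i => (ε i : ℝ)) l (𝓝[>] 0))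
    (hμ : ∀ᶠ i in l, ∀ θ : ℝ,
      charFun (μ i) θ = Complex.exp (levyExponent (ε i • Λ) (θ * Complex.I)))
    (hx : (n - 1) * M < x) (hatom : convPow Λ n {x} = 0) :
    Tendsto (fun i => (μ i).real (Ici x) / ε i ^ n) l
      (𝓝 ((convPow Λ n).real (Ici x) / n.factorial)) := by
  obtain ⟨y, hy, hyx⟩ := exists_between hx
  have hcont := (continuousAt_measureReal_Ici (convPow_Ici_ne_top hΛ hsq hy) hyx hatom).div_const
    (n.factorial : ℝ)
  have hshift (c : ℝ) : Tendsto (fun δ => x + c * δ) (𝓝[>] 0) (𝓝 x) := by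
    have hcts : Continuous fun δ => x + c * δ := by fun_prop
    simpa using (hcts.tendsto 0).mono_left nhdsWithin_le_nhds
  have hbelow : ∀ᶠ δ in 𝓝[>] 0, (n - 1) * M ≤ x + (-4 * (n + 1) - 1) * δ :=
    (hshift _).eventually_const_le hx
  have habove : ∀ᶠ δ in 𝓝[>] 0, (n - 1) * M ≤ x + (4 * (n + 1) - 1) * δ :=
    (hshift _).eventually_const_le hx
  refine tendsto_order.2 ⟨fun u hu => ?_, fun u hu => ?_⟩
  · obtain ⟨δ, hδu, hδx, hδ⟩ := (((hcont.tendsto.comp (hshift (4 * (n + 1)))).eventually_const_lt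
      hu).and (habove.and self_mem_nhdsWithin)).exists
    exact eventually_lt_measureReal_Ici_div_pow hΛ hsq hε hμ hδ (by linarith) hδu
  · obtain ⟨δ, hδu, hδx, hδ⟩ := (((hcont.tendsto.comp (hshift (-4 * (n + 1)))).eventually_lt_const
      hu).and (hbelow.and self_mem_nhdsWithin)).exists
    have hneg : x + -4 * (n + 1) * δ = x - 4 * (n + 1) * δ := by ring
    exact eventually_measureReal_Ici_div_pow_lt hM hΛ hsq hε hμ hδ (by linarith)
      (by rwa [← hneg])

end limit

end smallIntensity

/-! ### Multiplicative convolutions -/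

section mconv

variable {μ ν : Measure ℝ} {a b c x : ℝ} {n : ℕ}

lemma ae_mconv_mem_Ioc (hμ : ∀ᵐ r ∂μ, r ∈ Ioc 0 a) (hν : ∀ᵐ s ∂ν, s ∈ Ioc 0 b) :
    ∀ᵐ v ∂μ ∗ₘ ν, v ∈ Ioc 0 (a * b) := by
  refine (ae_map_iff (by fun_prop) measurableSet_Ioc).2 ?_
  filter_upwards [Measure.quasiMeasurePreserving_fst.ae hμ,
    Measure.quasiMeasurePreserving_snd.ae hν] with p hp hp'
  exact ⟨mul_pos hp.1 hp'.1, mul_le_mul hp.2 hp'.2 hp'.1.le (hp.1.le.trans hp.2)⟩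

lemma integrable_sq_mconv (hμ : Integrable (fun r => r ^ 2) μ)
    (hν : Integrable (fun s => s ^ 2) ν) : Integrable (fun v => v ^ 2) (μ ∗ₘ ν) := by
  rw [Measure.mconv, integrable_map_measure (by fun_prop) (by fun_prop)]
  exact (hμ.mul_prod hν).congr (.of_forall fun p => (mul_pow p.1 p.2 2).symm)

lemma mconv_Ici_ne_zero [SFinite ν] (hμ : μ (Ici x) ≠ 0) (hν : ν {1} ≠ 0) :
    (μ ∗ₘ ν) (Ici x) ≠ 0 := by
  have hbox : Ici x ×ˢ {1} ⊆ (fun p : ℝ × ℝ => p.1 * p.2) ⁻¹' Ici x := by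
    rintro ⟨r, s⟩ ⟨hr, rfl : s = 1⟩
    simpa using hr
  rw [Measure.mconv, Measure.map_apply (by fun_prop) measurableSet_Ici]
  exact mt (measure_mono_null hbox) (by simpa using ⟨hμ, hν⟩)

lemma pi_setOf_sum_mul_eq_eq_zero [SigmaFinite ν] (hν : ∀ s ≠ 1, ν {s} = 0)
    {y : Fin n → ℝ} (hy : ∀ i, y i ≠ 0) (hne : ∑ i, y i ≠ c) :
    (Measure.pi fun _ => ν) {s : Fin n → ℝ | ∑ i, y i * s i = c} = 0 := by
  induction n generalizing c with
  | zero => simp_all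
  | succ n ih =>
    have hsum : Measurable fun s : Fin (n + 1) → ℝ => ∑ i, y i * s i := by fun_prop
    have hmeas : MeasurableSet {s : Fin (n + 1) → ℝ | ∑ i, y i * s i = c} :=
      hsum (measurableSet_singleton c)
    have hsplit := (measurePreserving_piFinSuccAbove (fun _ : Fin (n + 1) => ν) 0).symm
    rw [← hsplit.measure_preimage hmeas.nullMeasurableSet,
      Measure.measure_prod_null (hsplit.measurable hmeas)]
    have hexc : (c - ∑ i : Fin n, y i.succ) / y 0 ≠ 1 := by
      rw [ne_eq, div_eq_one_iff_eq (hy 0), sub_eq_iff_eq_add, ← Fin.sum_univ_succ]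
      exact hne.symm
    filter_upwards [measure_eq_zero_iff_ae_notMem.1 (hν _ hexc)] with s hs
    have htail : ∑ i : Fin n, y i.succ ≠ c - y 0 * s := fun h =>
      hs ((eq_div_iff (hy 0)).2 (by linarith))
    rw [Pi.zero_apply, ← ih (fun i => hy i.succ) htail]
    congr 1 with z
    simp [Fin.sum_univ_succ, eq_sub_iff_add_eq', MeasurableEquiv.piFinSuccAbove]

variable [SigmaFinite μ] [SigmaFinite ν]

lemma convPow_mconv_eq_prod [SigmaFinite (μ ∗ₘ ν)] {A : Set ℝ} (hA : MeasurableSet A) :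
    convPow (μ ∗ₘ ν) n A = ((Measure.pi fun _ : Fin n => μ).prod (Measure.pi fun _ => ν))
      ((fun q => ∑ i, q.1 i * q.2 i) ⁻¹' A) := by
  have hmul : Measurable fun p : ℝ × ℝ => p.1 * p.2 := by fun_prop
  have hpi := Measure.pi_map_pi (μ := fun _ : Fin n => μ.prod ν) (f := fun _ p => p.1 * p.2)
    (hμ := fun _ => ‹SigmaFinite (μ ∗ₘ ν)›) fun _ => hmul.aemeasurable
  have hpre : MeasurableSet ((fun q : (Fin n → ℝ) × (Fin n → ℝ) => ∑ i, q.1 i * q.2 i) ⁻¹' A) :=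
    measurableSet_preimage (by fun_prop) hA
  have hset : MeasurableSet {y : Fin n → ℝ | ∑ i, y i ∈ A} :=
    measurableSet_preimage (by fun_prop) hA
  rw [convPow_apply hA, Measure.mconv, ← hpi,
    Measure.map_apply (by fun_prop) hset,
    ← (measurePreserving_arrowProdEquivProdArrow ℝ ℝ (Fin n) (fun _ => μ)
      fun _ => ν).measure_preimage hpre.nullMeasurableSet]
  rfl

lemma convPow_mconv_apply [SigmaFinite (μ ∗ₘ ν)] {A : Set ℝ} (hA : MeasurableSet A) :
    convPow (μ ∗ₘ ν) n A = ∫⁻ s, (Measure.pi fun _ => μ) {x : Fin n → ℝ | ∑ i, s i * x i ∈ A}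
      ∂(Measure.pi fun _ => ν) := by
  rw [convPow_mconv_eq_prod hA,
    Measure.prod_apply_symm (measurableSet_preimage (by fun_prop) hA)]
  refine lintegral_congr fun s => congrArg _ ?_
  ext x
  simp only [mem_preimage, mem_ofPred_eq, mul_comm]

lemma convPow_mconv_singleton_eq_zero [SigmaFinite (μ ∗ₘ ν)] (hμ : ∀ᵐ r ∂μ, r ≠ 0)
    (hν : ∀ s ≠ 1, ν {s} = 0) (hatom : convPow μ n {c} = 0) : convPow (μ ∗ₘ ν) n {c} = 0 := by
  rw [convPow_apply (measurableSet_singleton c), measure_eq_zero_iff_ae_notMem] at hatom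
  rw [convPow_mconv_eq_prod (measurableSet_singleton c),
    Measure.measure_prod_null (measurableSet_preimage (by fun_prop) (measurableSet_singleton c))]
  filter_upwards [ae_pi_forall hμ, hatom] with y hy hne
  exact pi_setOf_sum_mul_eq_eq_zero hν hy hne

end mconv

/-! ### The scaling limit of the telecom intensity -/

section telecom

variable {γ t a c : ℝ}

lemma setLIntegral_Ici_rpow_add_rpow {A B : ℝ} (hγ : 1 < γ) (hc : 0 < c)
    (hAB : ∀ s, c ≤ s → 0 ≤ A + B * s) :
    ∫⁻ s in Ici c, ENNReal.ofReal (A * s ^ (-(γ + 1)) + B * s ^ (-γ))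
      = ENNReal.ofReal (A * (c ^ (-γ) / γ) + B * (c ^ (1 - γ) / (γ - 1))) := by
  have hint : ∀ p < (-1 : ℝ), IntegrableOn (fun s : ℝ => s ^ p) (Ioi c) := fun p hp =>
    integrableOn_Ioi_rpow_of_lt hp hc
  have hA := (hint (-(γ + 1)) (by linarith)).const_mul A
  have hB := (hint (-γ) (by linarith)).const_mul B
  have hint_add : IntegrableOn (fun s => A * s ^ (-(γ + 1)) + B * s ^ (-γ)) (Ioi c) := hA.add hB
  have hnonneg : ∀ᵐ s ∂volume.restrict (Ioi c), 0 ≤ A * s ^ (-(γ + 1)) + B * s ^ (-γ) := by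
    filter_upwards [ae_restrict_mem measurableSet_Ioi] with s hs
    have hs0 : 0 < s := hc.trans hs
    have hsplit : s ^ (-γ) = s * s ^ (-(γ + 1)) := by
      rw [mul_comm, ← Real.rpow_add_one hs0.ne']
      ring_nf
    rw [hsplit, ← mul_assoc, ← add_mul]
    exact mul_nonneg (hAB s hs.le) (Real.rpow_nonneg hs0.le _)
  rw [← setLIntegral_congr Ioi_ae_eq_Ici, ← ofReal_integral_eq_lintegral_ofReal hint_add hnonneg,
    integral_add hA hB, integral_const_mul, integral_const_mul,
    integral_Ioi_rpow_of_lt (by linarith) hc, integral_Ioi_rpow_of_lt (by linarith) hc,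
    show -(γ + 1) + 1 = -γ by ring, show -γ + 1 = 1 - γ by ring, neg_div_neg_eq,
    ← neg_sub γ 1, neg_div_neg_eq]

/-- The tail `∫_c^∞ (s^{-(γ+1)} + ((2-γ)/γ) s^{-γ}) ds` of the density of `ν`, extended from `(0,1)`
to `(0,∞)`. The atom of `ν` at `1` has mass `telecomTail γ 1`, so that `ν` is this extension with
`[1,∞)` collapsed to the point `1`. -/
noncomputable def telecomTail (γ c : ℝ) : ℝ :=
  c ^ (-γ) / γ + (2 - γ) / γ * (c ^ (1 - γ) / (γ - 1))

lemma telecomTail_one (hγ : 1 < γ) : telecomTail γ 1 = 1 / (γ * (γ - 1)) := by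
  have hγ0 : γ ≠ 0 := by positivity
  have hγ1 : γ - 1 ≠ 0 := (sub_pos.2 hγ).ne'
  rw [telecomTail, Real.one_rpow, Real.one_rpow]
  field_simp
  ring

lemma setLIntegral_Ici_telecom (hγ1 : 1 < γ) (hγ2 : γ ≤ 2) (hc : 0 < c) :
    ∫⁻ s in Ici c, ENNReal.ofReal (s ^ (-(γ + 1)) + (2 - γ) / γ * s ^ (-γ))
      = ENNReal.ofReal (telecomTail γ c) := by
  have h2γ : 0 ≤ (2 - γ) / γ := div_nonneg (sub_nonneg.2 hγ2) (by positivity)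
  have h := setLIntegral_Ici_rpow_add_rpow (A := 1) hγ1 hc fun s hs =>
    add_nonneg zero_le_one (mul_nonneg h2γ (hc.le.trans hs))
  simpa only [one_mul, telecomTail] using h

lemma nuM_Ici (hγ1 : 1 < γ) (hγ2 : γ ≤ 2) (hc : 0 < c) (hc1 : c ≤ 1) :
    nuM γ (Ici c) = ENNReal.ofReal (telecomTail γ c) := by
  have hatom : ((1 / (γ * (γ - 1))).toNNReal • Measure.dirac (1 : ℝ)) (Ici c)
      = ∫⁻ s in Ici 1, ENNReal.ofReal (s ^ (-(γ + 1)) + (2 - γ) / γ * s ^ (-γ)) := by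
    rw [setLIntegral_Ici_telecom hγ1 hγ2 one_pos, telecomTail_one hγ1,
      Measure.smul_apply, ENNReal.smul_def, smul_eq_mul,
      Measure.dirac_apply_of_mem (mem_Ici.2 hc1), mul_one, ENNReal.ofReal]
  have hIco : Ici c ∩ Ioo 0 1 = Ico c 1 := by
    ext s
    exact ⟨fun h => ⟨h.1, h.2.2⟩, fun h => ⟨h.1, hc.trans_le h.1, h.2⟩⟩
  have hdisj : Disjoint (Ico c 1) (Ici 1) := disjoint_left.2 fun _ h => h.2.not_ge
  rw [nuM, Measure.add_apply, hatom, withDensity_apply _ measurableSet_Ici,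
    Measure.restrict_restrict measurableSet_Ici, hIco,
    ← lintegral_union measurableSet_Ici hdisj, Ico_union_Ici_eq_Ici hc1,
    setLIntegral_Ici_telecom hγ1 hγ2 hc]

lemma ae_nuM_mem_Ioc (γ : ℝ) : ∀ᵐ s ∂nuM γ, s ∈ Ioc 0 1 := by
  refine ae_add_measure_iff.2 ⟨?_, Measure.ae_smul_measure ?_ _⟩
  · refine (withDensity_absolutelyContinuous _ _).ae_le ?_
    filter_upwards [ae_restrict_mem measurableSet_Ioo] with s hs using ⟨hs.1, hs.2.le⟩
  · exact (ae_dirac_iff measurableSet_Ioc).2 ⟨one_pos, le_rfl⟩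

lemma nuM_Ici_eq_zero (γ : ℝ) (hc : 1 < c) : nuM γ (Ici c) = 0 :=
  measure_eq_zero_iff_ae_notMem.2 <|
    (ae_nuM_mem_Ioc γ).mono fun _ hs hcs => (hs.2.trans_lt hc).not_ge hcs

lemma nuM_singleton_eq_zero (γ : ℝ) (hc : c ≠ 1) : nuM γ {c} = 0 := by
  rw [nuM, Measure.add_apply, Measure.smul_apply,
    Measure.dirac_apply' _ (measurableSet_singleton c),
    indicator_of_notMem (by simpa using hc.symm), smul_zero, add_zero]
  exact (withDensity_absolutelyContinuous _ _).trans Measure.absolutelyContinuous_restrict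
    Real.volume_singleton

lemma nuM_singleton_one_ne_zero (hγ : 1 < γ) : nuM γ {1} ≠ 0 := by
  have hmass : 0 < 1 / (γ * (γ - 1)) := one_div_pos.2 (mul_pos (by positivity) (sub_pos.2 hγ))
  rw [nuM, Measure.add_apply, Measure.smul_apply, ENNReal.smul_def, smul_eq_mul,
    Measure.dirac_apply_of_mem (mem_singleton _), mul_one]
  exact (lt_of_lt_of_le (by simpa only [ENNReal.coe_pos, Real.toNNReal_pos] using hmass)
    le_add_self).ne'

lemma integrable_sq_nuM (hγ1 : 0 ≤ γ) (hγ2 : γ < 2) : Integrable (fun s => s ^ 2) (nuM γ) := by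
  refine Integrable.add_measure ?_ (integrable_dirac (by simp)).smul_measure_nnreal
  rw [integrable_withDensity_iff (by fun_prop) (.of_forall fun _ => ENNReal.ofReal_lt_top)]
  have hint : ∀ p > (-1 : ℝ), IntegrableOn (fun s : ℝ => s ^ p) (Ioo 0 1) := fun p hp =>
    (intervalIntegral.integrableOn_Ioo_rpow_iff one_pos).2 hp
  refine ((hint (1 - γ) (by linarith)).add
    ((hint (2 - γ) (by linarith)).const_mul ((2 - γ) / γ))).congr ?_
  filter_upwards [ae_restrict_mem measurableSet_Ioo] with s hs
  have hs0 : 0 < s := hs.1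
  have h2γ : 0 ≤ (2 - γ) / γ := div_nonneg (by linarith) hγ1
  have hdensity : 0 ≤ s ^ (-(γ + 1)) + (2 - γ) / γ * s ^ (-γ) :=
    add_nonneg (by positivity) (mul_nonneg h2γ (by positivity))
  rw [ENNReal.toReal_ofReal hdensity, Pi.add_apply,
    show 1 - γ = (2 : ℕ) + -(γ + 1) by push_cast; ring,
    show 2 - γ = (2 : ℕ) + -γ by push_cast; ring, Real.rpow_add hs0, Real.rpow_add hs0,
    Real.rpow_natCast]
  ring

lemma le_ellK_iff {s u : ℝ} (ha : 0 < a) :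
    a ≤ ellK t s u ↔ a ≤ u ∧ a ≤ t ∧ s ∈ Icc (a - u) (t - a) := by
  simp only [ellK, le_max_iff, ha.not_ge, false_or, mem_Icc]
  rw [le_sub_iff_add_le, le_min_iff, ← max_add_add_left, max_le_iff, max_le_iff]
  constructor
  · rintro ⟨⟨_, _⟩, _, _⟩
    refine ⟨?_, ?_, ?_, ?_⟩ <;> linarith
  · rintro ⟨_, _, _, _⟩
    refine ⟨⟨?_, ?_⟩, ?_, ?_⟩ <;> linarith

instance (γ : ℝ) : SFinite (muU γ) := by
  unfold muU
  infer_instance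

lemma muEll_Ici_eq_setLIntegral (γ : ℝ) (ha : 0 < a) (hat : a ≤ t) :
    muEll γ t (Ici a) = ∫⁻ u in Ici a, ENNReal.ofReal (t - 2 * a + u) ∂muU γ := by
  have hmeas : Measurable fun p : ℝ × ℝ => ellK t p.1 p.2 := by
    unfold ellK
    fun_prop
  have hslice (u : ℝ) : (fun s => (s, u)) ⁻¹' ((fun p : ℝ × ℝ => ellK t p.1 p.2) ⁻¹' Ici a)
      = if u ∈ Ici a then Icc (a - u) (t - a) else ∅ := by
    ext s
    split_ifs with hu <;> simp_all [le_ellK_iff]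
  rw [muEll, Measure.restrict_eq_self _ (Ici_subset_Ioi.2 ha),
    Measure.map_apply hmeas measurableSet_Ici,
    Measure.prod_apply_symm (hmeas measurableSet_Ici), ← lintegral_indicator measurableSet_Ici]
  refine lintegral_congr fun u => ?_
  rw [hslice, indicator_apply]
  split_ifs
  · rw [Real.volume_Icc]
    ring_nf
  · exact measure_empty

lemma muEll_Ici (hγ : 1 < γ) (ha : 0 < a) (hat : a ≤ t) :
    muEll γ t (Ici a) = ENNReal.ofReal (t ^ (1 - γ) * telecomTail γ (a / t)) := by
  have ht : 0 < t := ha.trans_le hat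
  rw [muEll_Ici_eq_setLIntegral γ ha hat, muU, restrict_withDensity measurableSet_Ici,
    Measure.restrict_restrict measurableSet_Ici, inter_eq_left.2 (Ici_subset_Ioi.2 ha),
    lintegral_withDensity_eq_lintegral_mul _ (by fun_prop) (by fun_prop)]
  have hdensity : ∀ u ∈ Ici a, ((fun u => ENNReal.ofReal (u ^ (-γ - 1))) *
      fun u => ENNReal.ofReal (t - 2 * a + u)) u
      = ENNReal.ofReal ((t - 2 * a) * u ^ (-(γ + 1)) + 1 * u ^ (-γ)) := by
    intro u hu
    have hu0 : 0 < u := ha.trans_le hu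
    rw [Pi.mul_apply, ← ENNReal.ofReal_mul (by positivity), show -γ = -γ - 1 + 1 by ring,
      Real.rpow_add_one hu0.ne']
    ring_nf
  rw [setLIntegral_congr_fun measurableSet_Ici hdensity, setLIntegral_Ici_rpow_add_rpow hγ ha
    fun u hu => by linarith]
  have hrpow {x : ℝ} (hx : 0 < x) : x ^ (1 - γ) = x * x ^ (-γ) := by
    rw [sub_eq_neg_add, Real.rpow_add_one hx.ne', mul_comm]
  have htγ : t ^ (-γ) ≠ 0 := (Real.rpow_pos_of_pos ht _).ne'
  have hγ1 : γ - 1 ≠ 0 := (sub_pos.2 hγ).ne'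
  rw [telecomTail, hrpow (div_pos ha ht), Real.div_rpow ha.le ht.le, hrpow ha, hrpow ht]
  congr 1
  field_simp
  ring

lemma muEll_Ici_eq_zero (γ : ℝ) (ha : 0 < a) (hta : t < a) : muEll γ t (Ici a) = 0 := by
  have hempty : (fun p : ℝ × ℝ => ellK t p.1 p.2) ⁻¹' Ici a = ∅ :=
    eq_empty_of_forall_notMem fun _ h => hta.not_ge ((le_ellK_iff ha).1 h).2.1
  have hmeas : Measurable fun p : ℝ × ℝ => ellK t p.1 p.2 := by
    unfold ellK
    fun_prop
  rw [muEll, Measure.restrict_eq_self _ (Ici_subset_Ioi.2 ha),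
    Measure.map_apply hmeas measurableSet_Ici, hempty, measure_empty]

lemma measure_ext_of_Ici_of_pos {μ ν : Measure ℝ} (hμ : ∀ᵐ v ∂μ, 0 < v) (hν : ∀ᵐ v ∂ν, 0 < v)
    (hfin : ∀ x > 0, μ (Ici x) ≠ ⊤) (h : ∀ x > 0, μ (Ici x) = ν (Ici x)) : μ = ν := by
  obtain ⟨u, -, hu0, hu⟩ := exists_seq_strictAnti_tendsto (0 : ℝ)
  have hUnion : ⋃ k, Ici (u k) = Ioi 0 := iUnion_Ici_eq_Ioi_of_lt_of_tendsto hu0 hu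
  rw [← Measure.restrict_eq_self_of_ae_mem (s := Ioi 0) hμ,
    ← Measure.restrict_eq_self_of_ae_mem (s := Ioi 0) hν, ← hUnion, Measure.restrict_iUnion_congr]
  intro k
  have : IsFiniteMeasure (μ.restrict (Ici (u k))) := isFiniteMeasure_restrict.2 (hfin _ (hu0 k))
  refine Measure.ext_of_Ici _ _ fun x => ?_
  rw [Measure.restrict_apply measurableSet_Ici, Measure.restrict_apply measurableSet_Ici,
    Ici_inter_Ici]
  exact h _ (lt_sup_of_lt_right (hu0 k))

lemma muEll_eq_smul_map_nuM (hγ1 : 1 < γ) (hγ2 : γ ≤ 2) (ht : 0 < t) :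
    muEll γ t = (t ^ (1 - γ)).toNNReal • (nuM γ).map (t * ·) := by
  refine measure_ext_of_Ici_of_pos (ae_restrict_mem measurableSet_Ioi)
    (Measure.ae_smul_measure ?_ _) (fun a ha => ?_) fun a ha => ?_
  · refine (ae_map_iff (by fun_prop) measurableSet_Ioi).2 ?_
    filter_upwards [ae_nuM_mem_Ioc γ] with s hs using mul_pos ht hs.1
  · rcases le_or_gt a t with hat | hta
    · simp [muEll_Ici hγ1 ha hat]
    · simp [muEll_Ici_eq_zero γ ha hta]
  · have hpre : (t * ·) ⁻¹' Ici a = Ici (a / t) := by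
      ext s
      exact (div_le_iff₀' ht).symm
    rw [Measure.smul_apply, ENNReal.smul_def, smul_eq_mul,
      Measure.map_apply (by fun_prop) measurableSet_Ici, hpre]
    rcases le_or_gt a t with hat | hta
    · rw [muEll_Ici hγ1 ha hat, nuM_Ici hγ1 hγ2 (div_pos ha ht) ((div_le_one ht).2 hat),
        ENNReal.ofReal_mul (by positivity)]
      rfl
    · rw [muEll_Ici_eq_zero γ ha hta, nuM_Ici_eq_zero γ ((one_lt_div ht).2 hta), mul_zero]

variable {FR : Measure ℝ} [SFinite FR]

lemma muEllR_eq_smul_map_mconv (hγ1 : 1 < γ) (hγ2 : γ ≤ 2) (hFR : ∀ᵐ r ∂FR, 0 < r) (ht : 0 < t) :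
    muEllR γ t FR = (t ^ (1 - γ)).toNNReal • (FR ∗ₘ nuM γ).map (t * ·) := by
  have hscale : FR ∗ₘ (nuM γ).map (t * ·) = (FR ∗ₘ nuM γ).map (t * ·) := by
    have hprod : FR.prod ((nuM γ).map (t * ·)) = (FR.prod (nuM γ)).map (Prod.map id (t * ·)) := by
      rw [← Measure.map_prod_map _ _ measurable_id (by fun_prop), Measure.map_id]
    rw [Measure.mconv, Measure.mconv, hprod, Measure.map_map (by fun_prop) (by fun_prop),
      Measure.map_map (by fun_prop) (by fun_prop)]
    congr 1 with p
    exact mul_left_comm _ _ _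
  have hpos : ∀ᵐ v ∂(t ^ (1 - γ)).toNNReal • (FR ∗ₘ nuM γ).map (t * ·), v ∈ Ioi 0 := by
    refine Measure.ae_smul_measure ((ae_map_iff (by fun_prop) measurableSet_Ioi).2 ?_) _
    have hmeas : MeasurableSet {v : ℝ | t * v ∈ Ioi 0} :=
      measurableSet_preimage (by fun_prop) measurableSet_Ioi
    refine (ae_map_iff (by fun_prop) hmeas).2 ?_
    filter_upwards [Measure.quasiMeasurePreserving_fst.ae hFR,
      Measure.quasiMeasurePreserving_snd.ae (ae_nuM_mem_Ioc γ)] with p hp hp'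
    exact mul_pos ht (mul_pos hp hp'.1)
  have hmconv : FR ∗ₘ muEll γ t = (t ^ (1 - γ)).toNNReal • (FR ∗ₘ nuM γ).map (t * ·) := by
    rw [muEll_eq_smul_map_nuM hγ1 hγ2 ht, ← hscale, Measure.mconv, Measure.mconv,
      Measure.prod_smul_right, Measure.map_smul]
  rw [muEllR, ← Measure.mconv, hmconv, Measure.restrict_eq_self_of_ae_mem hpos]

end telecom

/-! ### The rescaled telecom process -/

/-- The intensity `Q t^{1-γ}`: the Lévy measure of `Y_t / t` is `telecomRate Q γ t` times the
multiplicative convolution of the law of `R` and `ν`. -/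
noncomputable def telecomRate (Q γ t : ℝ) : ℝ≥0 :=
  Q.toNNReal * (t ^ (1 - γ)).toNNReal

lemma tendsto_telecomRate {Q γ : ℝ} (hQ : 0 < Q) (hγ : 1 < γ) :
    Tendsto (fun t => (telecomRate Q γ t : ℝ)) atTop (𝓝[>] 0) := by
  have hpos : ∀ᶠ t in atTop, 0 < (telecomRate Q γ t : ℝ) := by
    filter_upwards [eventually_gt_atTop 0] with t ht
    exact NNReal.coe_pos.2 (mul_pos (Real.toNNReal_pos.2 hQ)
      (Real.toNNReal_pos.2 (Real.rpow_pos_of_pos ht _)))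
  refine tendsto_nhdsWithin_iff.2 ⟨?_, hpos⟩
  have hlim := ((tendsto_rpow_neg_atTop (sub_pos.2 hγ)).const_mul Q)
  rw [mul_zero, neg_sub] at hlim
  refine hlim.congr' ?_
  filter_upwards [eventually_ge_atTop 0] with t ht
  simp [telecomRate, hQ.le, Real.rpow_nonneg ht]

lemma coe_telecomRate_pow {Q t : ℝ} (hQ : 0 ≤ Q) (γ : ℝ) (ht : 0 ≤ t) (n : ℕ) :
    (telecomRate Q γ t : ℝ) ^ n = Q ^ n * t ^ (-((γ - 1) * n)) := by
  rw [telecomRate, NNReal.coe_mul, Real.coe_toNNReal _ hQ,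
    Real.coe_toNNReal _ (Real.rpow_nonneg ht _), mul_pow, ← Real.rpow_mul_natCast ht]
  ring_nf

lemma levyExponent_map_const_mul (Λ : Measure ℝ) (t : ℝ) (z : ℂ) :
    levyExponent (Λ.map (t * ·)) z = levyExponent Λ (z * t) := by
  rw [levyExponent, levyExponent, integral_map (by fun_prop) (by fun_prop)]
  simp_rw [Complex.ofReal_mul, mul_assoc]

lemma levyExponent_muEllR {γ t : ℝ} {FR : Measure ℝ} [SFinite FR] (hγ1 : 1 < γ) (hγ2 : γ ≤ 2)
    (hFR : ∀ᵐ r ∂FR, 0 < r) (ht : 0 < t) {Q : ℝ} (hQ : 0 ≤ Q) (z : ℂ) :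
    Q * levyExponent (muEllR γ t FR) (z / t)
      = levyExponent (telecomRate Q γ t • (FR ∗ₘ nuM γ)) z := by
  have ht' : (t : ℂ) ≠ 0 := Complex.ofReal_ne_zero.2 ht.ne'
  rw [muEllR_eq_smul_map_mconv hγ1 hγ2 hFR ht, levyExponent_smul, levyExponent_map_const_mul,
    levyExponent_smul, div_mul_cancel₀ _ ht', telecomRate, NNReal.coe_mul, Complex.ofReal_mul,
    Real.coe_toNNReal _ hQ, mul_assoc]

section law

variable {Ω : Type*} [MeasurableSpace Ω] {P : Measure Ω} {X : Ω → ℝ}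

lemma charFun_map_div (hX : Measurable X) (t θ : ℝ) :
    charFun (P.map (X · / t)) θ = ∫ ω, Complex.exp ((θ / t : ℝ) * X ω * Complex.I) ∂P := by
  rw [charFun_apply_real, integral_map (by fun_prop) (by fun_prop)]
  refine integral_congr_ae (.of_forall fun ω => congrArg Complex.exp ?_)
  push_cast
  ring

lemma measureReal_map_div_Ici (hX : Measurable X) {t : ℝ} (ht : 0 < t) (κ : ℝ) :
    (P.map (X · / t)).real (Ici κ) = P.real {ω | κ * t ≤ X ω} := by
  rw [map_measureReal_apply (by fun_prop) measurableSet_Ici]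
  congr 1 with ω
  exact le_div_iff₀ ht

lemma charFun_map_div_eq_exp_levyExponent {γ t Q : ℝ} {FR : Measure ℝ} [SFinite FR]
    (hγ1 : 1 < γ) (hγ2 : γ ≤ 2) (hFR : ∀ᵐ r ∂FR, 0 < r) (ht : 0 < t) (hQ : 0 ≤ Q)
    (hX : Measurable X) (hchar : ∀ θ : ℝ, ∫ ω, Complex.exp (θ * X ω * Complex.I) ∂P
      = Complex.exp (Q * ∫ v, (Complex.exp (θ * v * Complex.I) - 1 - θ * v * Complex.I)
          ∂(muEllR γ t FR))) (θ : ℝ) :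
    charFun (P.map (X · / t)) θ
      = Complex.exp (levyExponent (telecomRate Q γ t • (FR ∗ₘ nuM γ)) (θ * Complex.I)) := by
  rw [charFun_map_div hX, hchar, ← levyExponent_muEllR hγ1 hγ2 hFR ht hQ, levyExponent]
  simp only [Complex.ofReal_div, mul_div_right_comm, mul_right_comm _ Complex.I]

end law

section tail

lemma sub_one_mul_div_sub_lt {x ζ κ : ℝ} (hζ : ζ < 1) (hx : ζ < x) (hκ : 0 < κ) :
    (x - 1) * (κ / (x - ζ)) < κ := by
  rw [← mul_div_assoc, div_lt_iff₀ (sub_pos.2 hx)]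
  nlinarith

variable {γ Q M κ : ℝ} {n : ℕ} {FR : Measure ℝ}

lemma ae_mconv_nuM_mem_Ioc (γ : ℝ) (hFR : ∀ᵐ r ∂FR, r ∈ Ioc 0 M) :
    ∀ᵐ v ∂FR ∗ₘ nuM γ, v ∈ Ioc 0 M := by
  simpa only [mul_one] using ae_mconv_mem_Ioc hFR (ae_nuM_mem_Ioc γ)

variable [IsFiniteMeasure FR]

lemma integrable_sq_mconv_nuM (hγ1 : 0 ≤ γ) (hγ2 : γ < 2) (hFR : ∀ᵐ r ∂FR, r ∈ Ioc 0 M) :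
    Integrable (fun v => v ^ 2) (FR ∗ₘ nuM γ) :=
  integrable_sq_mconv (integrable_sq_of_ae_abs_le (ae_abs_le_of_ae_mem_Ioc hFR))
    (integrable_sq_nuM hγ1 hγ2)

theorem tendsto_telecom_tail_div_telecomRate_pow (hγ1 : 1 < γ) (hγ2 : γ < 2) (hQ : 0 < Q)
    {Ω : Type*} [MeasurableSpace Ω] {P : Measure Ω} [IsProbabilityMeasure P]
    {Y : ℝ → Ω → ℝ} (hYmeas : ∀ t, Measurable (Y t))
    (hYchar : ∀ t : ℝ, 0 < t → ∀ θ : ℝ, ∫ ω, Complex.exp (θ * Y t ω * Complex.I) ∂P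
      = Complex.exp (Q * ∫ v, (Complex.exp (θ * v * Complex.I) - 1 - θ * v * Complex.I)
          ∂(muEllR γ t FR)))
    (hM : 0 ≤ M) (hFR : ∀ᵐ r ∂FR, r ∈ Ioc 0 M) (hκ : (n - 1) * M < κ)
    (hatom : convPow FR n {κ} = 0) :
    Tendsto (fun t => P.real {ω | κ * t ≤ Y t ω} / telecomRate Q γ t ^ n) atTop
      (𝓝 ((convPow (FR ∗ₘ nuM γ) n).real (Ici κ) / n.factorial)) := by
  have hFR0 : ∀ᵐ r ∂FR, 0 < r := hFR.mono fun _ hr => hr.1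
  have hΛ := ae_mconv_nuM_mem_Ioc γ hFR
  have hsq := integrable_sq_mconv_nuM (zero_le_one.trans hγ1.le) hγ2 hFR
  have := sigmaFinite_of_ae_mem_Ioc hΛ hsq
  have hprob (t : ℝ) : IsProbabilityMeasure (P.map (Y t · / t)) :=
    Measure.isProbabilityMeasure_map ((hYmeas t).div_const t).aemeasurable
  have hchar : ∀ᶠ t in atTop, ∀ θ : ℝ, charFun (P.map (Y t · / t)) θ =
      Complex.exp (levyExponent (telecomRate Q γ t • (FR ∗ₘ nuM γ)) (θ * Complex.I)) :=
    (eventually_gt_atTop 0).mono fun t ht =>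
      charFun_map_div_eq_exp_levyExponent hγ1 hγ2.le hFR0 ht hQ.le (hYmeas t) (hYchar t ht)
  have hatomΛ : convPow (FR ∗ₘ nuM γ) n {κ} = 0 :=
    convPow_mconv_singleton_eq_zero (hFR0.mono fun _ hr => hr.ne')
      (fun _ => nuM_singleton_eq_zero γ) hatom
  refine (tendsto_measureReal_Ici_div_pow hM hΛ hsq (tendsto_telecomRate hQ hγ1) hchar hκ
    hatomΛ).congr' ?_
  filter_upwards [eventually_gt_atTop 0] with t ht
  rw [measureReal_map_div_Ici (hYmeas t) ht]

end tail

/-- `n`-fold intermediate large deviations: if `P(R ≥ κ/n) > 0`, `P(R ≥ κ/(n-ζ)) = 0` for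
some `ζ ∈ (0,1)`, and `P(R₁ + ⋯ + Rₙ = κ) = 0` for independent copies `R₁,…,Rₙ` of `R`,
then `P(Y_t ≥ κt) = Qⁿ·D_I^{(n)}(κ)·t^{-(γ-1)n}·(1+o(1))` as `t → ∞`, where
`D_I^{(n)}(κ) = (1/n!)∫_{[0,1]ⁿ} P(s₁R₁ + ⋯ + sₙRₙ ≥ κ) ν(ds₁)⋯ν(dsₙ)` is a finite
positive constant. (Independent copies are expressed via the product measure `FRⁿ`.) -/
theorem stmt_3 (γ Q : ℝ) (hγ1 : 1 < γ) (hγ2 : γ < 2) (hQ : 0 < Q)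
    (FR : Measure ℝ) [IsProbabilityMeasure FR] (hFRpos : FR (Set.Iic 0) = 0)
    (hmom : Integrable (fun r => r ^ γ) FR)
    (Ω : Type*) [MeasurableSpace Ω] (P : Measure Ω) [IsProbabilityMeasure P]
    (Y : ℝ → Ω → ℝ) (hYmeas : ∀ t, Measurable (Y t))
    (hYchar : ∀ t : ℝ, 0 < t → ∀ θ : ℝ,
      ∫ ω, Complex.exp (θ * Y t ω * Complex.I) ∂P
        = Complex.exp (Q * ∫ v, (Complex.exp (θ * v * Complex.I) - 1 - θ * v * Complex.I)
            ∂(muEllR γ t FR)))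
    (κ : ℝ) (hκ : 0 < κ) (n : ℕ) (hn : 0 < n)
    (hsupp1 : FR (Set.Ici (κ / n)) ≠ 0)
    (hsupp2 : ∃ ζ ∈ Set.Ioo (0 : ℝ) 1, FR (Set.Ici (κ / (n - ζ))) = 0)
    (hatom : (Measure.pi fun _ : Fin n => FR) {x | ∑ i, x i = κ} = 0) :
    (∫⁻ s : Fin n → ℝ, (Measure.pi fun _ : Fin n => FR) {x | κ ≤ ∑ i, s i * x i}
        ∂(Measure.pi fun _ : Fin n => nuM γ)) ≠ ⊤
    ∧ 0 < (∫⁻ s : Fin n → ℝ, (Measure.pi fun _ : Fin n => FR) {x | κ ≤ ∑ i, s i * x i}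
        ∂(Measure.pi fun _ : Fin n => nuM γ))
    ∧ Tendsto (fun t => (P {ω | κ * t ≤ Y t ω}).toReal / t ^ (-((γ - 1) * n)))
        atTop
        (𝓝 (Q ^ n *
          ((∫⁻ s : Fin n → ℝ, (Measure.pi fun _ : Fin n => FR) {x | κ ≤ ∑ i, s i * x i}
              ∂(Measure.pi fun _ : Fin n => nuM γ)).toReal / n.factorial))) := by
  obtain ⟨ζ, ⟨-, hζ1⟩, hζ⟩ := hsupp2
  have hnζ : ζ < n := hζ1.trans_le (Nat.one_le_cast.2 hn)
  have hM : 0 < κ / (n - ζ) := div_pos hκ (sub_pos.2 hnζ)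
  have hκM : (n - 1) * (κ / (n - ζ)) < κ := sub_one_mul_div_sub_lt hζ1 hnζ hκ
  have hFR : ∀ᵐ r ∂FR, r ∈ Ioc 0 (κ / (n - ζ)) := by
    filter_upwards [measure_eq_zero_iff_ae_notMem.1 hFRpos, measure_eq_zero_iff_ae_notMem.1 hζ]
      with r hr hr' using ⟨not_le.1 hr, (not_le.1 hr').le⟩
  have hΛ := ae_mconv_nuM_mem_Ioc γ hFR
  have hsq := integrable_sq_mconv_nuM (zero_le_one.trans hγ1.le) hγ2 hFR
  have := sigmaFinite_of_ae_mem_Ioc hΛ hsq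
  have hD := convPow_mconv_apply (μ := FR) (ν := nuM γ) (n := n) (measurableSet_Ici (a := κ))
  simp only [mem_Ici] at hD
  rw [← hD]
  refine ⟨convPow_Ici_ne_top hΛ hsq hκM, pos_iff_ne_zero.2 (convPow_Ici_ne_zero hn.ne'
    (mconv_Ici_ne_zero hsupp1 (nuM_singleton_one_ne_zero hγ1))), ?_⟩
  have hlim := tendsto_telecom_tail_div_telecomRate_pow hγ1 hγ2 hQ hYmeas hYchar hM.le hFR hκM
    ((convPow_apply (measurableSet_singleton κ)).trans hatom)
  refine (hlim.const_mul (Q ^ n)).congr' ?_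
  filter_upwards [eventually_gt_atTop 0] with t ht
  rw [coe_telecomRate_pow hQ.le γ ht.le, ← mul_div_assoc, mul_div_mul_left _ _ (pow_pos hQ n).ne',
    measureReal_def]
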